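/- arXiv:1409.6243 — 2 statements merged into one kernel-verified Lean document; each statement's English description precedes it below -/
import Mathlib

section
/- Let t ≥ m ≥ 1 and N ≥ 1 be integers and let ζ = exp(2πi/N). Let L denote the limit, as q → ζ through complex numbers with q^N ≠ 1, of [ (-1)^N q^{-t + N((2t+1)N+1)/2} Σ_{k=-N}^{N-1} (-1)^k q^{-(2t+1)k(k+1)/2 + m k} ] / (1 - q^N). Then this limit exists and e^{2πi( t - (2t+1-2m)^2/(8(2t+1)) )/N} · L = (2t+1) N Σ_{k=1}^{4(2t+1)N} χ_{8t+4}^{(m)}(k) · e^{-2πi k^2/(8(2t+1)N)} · B_2( k/(4(2t+1)N) ). -/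
open Finset

/-- The periodic function `χ_{8T+4}^{(M)} : ℤ → {-1,0,1}` (with `T, M` the paper's
`t, m`): it is `1` on classes `± (2T+1-2M)` mod `8T+4`, `-1` on classes
`± (2T+1+2M)` mod `8T+4`, and `0` otherwise. -/
def chiP (T M k : ℤ) : ℤ :=
  if k % (8 * T + 4) = (2 * T + 1 - 2 * M) % (8 * T + 4) ∨
      k % (8 * T + 4) = (-(2 * T + 1 - 2 * M)) % (8 * T + 4) then 1
  else if k % (8 * T + 4) = (2 * T + 1 + 2 * M) % (8 * T + 4) ∨
      k % (8 * T + 4) = (-(2 * T + 1 + 2 * M)) % (8 * T + 4) then -1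
  else 0

/-- The second Bernoulli polynomial `B₂(x) = x² - x + 1/6` (on ℂ). -/
noncomputable def bern2 (x : ℂ) : ℂ := x ^ 2 - x + 1 / 6

/-!
Put `a = 2T+1`, `n_k = 2ak + (a - 2M)` and `ζ = exp (2πis/N)`. Completing the square, the exponent
of `q` in the `k`-th term is `((a - 2M)² - n_k²) / 8a`, so at `q = ζ` the terms of the alternating
sum are, up to a common factor, `g_k = (-1)^k ζ^(-n_k² / 8a)`. If `s` or `N` is odd, which holds at
every primitive `N`-th root of unity, then `g_{k+N} = -g_k`. Hence the numerator vanishes at `ζ`,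
and by l'Hôpital's rule the limit is a multiple of `G = ∑_{-N ≤ k < N} g_k n_k²`.

On the other side, `χ` is carried by the `±n_j`, with values `(-1)^j`, and the summand is invariant
under `k ↦ 4aN - k`, so the sum is twice `∑_{0 ≤ j < 2N} g_j B₂(n_j / 4aN)`. Writing
`B₂(x) = (x - 1/2)² - 1/12`, the constant does not contribute, and recentring at `1/2` is the shift
`j = k + N`, since `n_{k+N} / 4aN - 1/2 = n_k / 4aN`; so this sum is again a multiple of `G`.
-/

open Filter Topology

section Limit

variable {𝕜 : Type*} [NontriviallyNormedField 𝕜] {f g : 𝕜 → 𝕜} {f' g' x : 𝕜}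

lemma tendsto_div_of_hasDerivAt (hf : HasDerivAt f f' x) (hg : HasDerivAt g g' x)
    (hfx : f x = 0) (hgx : g x = 0) (hg' : g' ≠ 0) :
    Tendsto (fun y => f y / g y) (𝓝[≠] x) (𝓝 (f' / g')) := by
  refine (hf.tendsto_slope.div hg.tendsto_slope hg').congr' ?_
  filter_upwards [self_mem_nhdsWithin] with y hy
  rw [Pi.div_apply, slope_def_field, slope_def_field, hfx, hgx, sub_zero, sub_zero,
    div_div_div_cancel_right₀ (sub_ne_zero.2 hy)]

lemma tendsto_div_one_sub_pow {n : ℕ} (hn : (n : 𝕜) ≠ 0) (hx : x ^ n = 1)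
    (hf : HasDerivAt f f' x) (hfx : f x = 0) :
    Tendsto (fun y => f y / (1 - y ^ n)) (𝓝[{y | y ^ n ≠ 1}] x) (𝓝 (-(x * f') / n)) := by
  have hn₀ : n ≠ 0 := by rintro rfl; exact hn Nat.cast_zero
  have hx₀ : x ≠ 0 := by rintro rfl; simp [hn₀] at hx
  have hpow : x * x ^ (n - 1) = 1 := by rw [mul_pow_sub_one hn₀, hx]
  have hg : HasDerivAt (fun y => 1 - y ^ n) (-(n * x ^ (n - 1))) x :=
    (hasDerivAt_pow n x).const_sub 1
  have hg' : -(n * x ^ (n - 1)) ≠ 0 := neg_ne_zero.2 (mul_ne_zero hn (pow_ne_zero _ hx₀))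
  have hval : f' / -(n * x ^ (n - 1)) = -(x * f') / n := by
    rw [div_eq_div_iff hg' hn]
    linear_combination -(n * f') * hpow
  have hle : 𝓝[{y | y ^ n ≠ 1}] x ≤ 𝓝[≠] x :=
    nhdsWithin_mono x fun y hy hyx => hy (by rw [hyx, hx])
  rw [← hval]
  exact (tendsto_div_of_hasDerivAt hf hg hfx (by simp [hx]) hg').mono_left hle

end Limit

section Sums

variable {R : Type*} [AddCommGroup R]

lemma sum_Ico_add_two_mul_eq_zero_of_antiperiodic {g : ℤ → R} {d : ℤ} (hd : 0 ≤ d)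
    (hg : Function.Antiperiodic g d) (c : ℤ) : ∑ k ∈ Ico c (c + 2 * d), g k = 0 := by
  have hshift : ∑ k ∈ Ico (c + d) (c + 2 * d), g k = -∑ k ∈ Ico c (c + d), g k := by
    rw [two_mul, ← add_assoc, ← sum_Ico_add', ← sum_neg_distrib]
    exact sum_congr rfl fun k _ => hg k
  rw [← Ico_union_Ico_eq_Ico (show c ≤ c + d by lia) (show c + d ≤ c + 2 * d by lia),
    sum_union (Ico_disjoint_Ico_consecutive _ _ _), hshift, add_neg_cancel]

lemma sum_Icc_natCast (f : ℤ → R) (a b : ℕ) :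
    ∑ k ∈ Icc a b, f k = ∑ k ∈ Icc (a : ℤ) b, f k :=
  sum_nbij (↑) (by simp) Nat.cast_injective.injOn
    (by rw [Set.SurjOn, coe_Icc, coe_Icc, Nat.image_cast_int_Icc]) fun _ _ => rfl

end Sums

/-- The power `ζ ^ x` of the root of unity `ζ = exp (2πis/N)` for a complex exponent `x`, with
respect to the logarithm `2πis/N` of `ζ`. -/
noncomputable def zetaPow (s : ℤ) (N : ℕ) (x : ℂ) : ℂ :=
  Complex.exp (2 * Real.pi * Complex.I * s * x / N)

section ZetaPow

variable {s : ℤ} {N : ℕ}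

lemma zetaPow_ne_zero (x : ℂ) : zetaPow s N x ≠ 0 := Complex.exp_ne_zero _

lemma zetaPow_add (x y : ℂ) : zetaPow s N (x + y) = zetaPow s N x * zetaPow s N y := by
  rw [zetaPow, mul_add, add_div, Complex.exp_add, zetaPow, zetaPow]

lemma zetaPow_intCast (z : ℤ) : zetaPow s N z = zetaPow s N 1 ^ z := by
  rw [zetaPow, zetaPow, ← Complex.exp_int_mul]
  ring_nf

lemma zetaPow_natCast_mul_div_two (hN : N ≠ 0) (z : ℤ) :
    zetaPow s N (N * z / 2) = (-1) ^ (s * z) := by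
  rw [← Complex.exp_pi_mul_I, ← Complex.exp_int_mul, zetaPow]
  congr 1
  push_cast
  field_simp

lemma zetaPow_natCast_mul (hN : N ≠ 0) (z : ℤ) : zetaPow s N (N * z) = 1 := by
  have h := zetaPow_natCast_mul_div_two (s := s) hN (2 * z)
  rwa [((even_two_mul z).mul_left s).neg_one_zpow, Int.cast_mul, Int.cast_ofNat, mul_left_comm,
    mul_div_cancel_left₀ _ two_ne_zero] at h

lemma zetaPow_one_pow (hN : N ≠ 0) : zetaPow s N 1 ^ N = 1 := by
  rw [← zpow_natCast, ← zetaPow_intCast]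
  simpa using zetaPow_natCast_mul (s := s) hN 1

lemma neg_one_pow_mul_zetaPow_half (hN : N ≠ 0) (hs : Odd s ∨ Odd N) {z : ℤ} (hz : Odd (z + N)) :
    (-1) ^ N * zetaPow s N (N * z / 2) = -1 := by
  have hodd : Odd (N + s * z) := by
    simp only [Int.odd_add, Int.odd_mul, Int.odd_coe_nat, ← Int.not_odd_iff_even] at hz ⊢
    tauto
  rw [zetaPow_natCast_mul_div_two hN, ← zpow_natCast, ← zpow_add₀ (by simp), hodd.neg_one_zpow]

end ZetaPow

/-- The arithmetic progression carrying the function `χ_{8T+4}^{(M)}`: the support of `χ` consists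
of the numbers `±chiNode T M j`, at which its value is `(-1) ^ j`. -/
def chiNode (T M j : ℤ) : ℤ := 2 * (2 * T + 1) * j + (2 * T + 1 - 2 * M)

section Character

variable {T M : ℤ}

lemma chiP_add_mul (T M k c : ℤ) : chiP T M (k + (8 * T + 4) * c) = chiP T M k := by
  simp only [chiP, Int.add_mul_emod_self_left]

lemma chiP_neg (T M k : ℤ) : chiP T M (-k) = chiP T M k := by
  have hneg (x : ℤ) :
      -k % (8 * T + 4) = x % (8 * T + 4) ↔ k % (8 * T + 4) = -x % (8 * T + 4) := by
    change -k ≡ x [ZMOD 8 * T + 4] ↔ k ≡ -x [ZMOD 8 * T + 4]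
    rw [← Int.neg_modEq_neg, neg_neg]
  simp only [chiP, hneg, neg_neg, or_comm]

lemma chiP_reflect (T M c k : ℤ) : chiP T M (4 * (2 * T + 1) * c - k) = chiP T M k := by
  rw [← chiP_neg T M k, ← chiP_add_mul T M (-k) c]
  ring_nf

lemma not_dvd_two_mul (hM : M ≠ 0) (hMT : |M| ≤ T) : ¬ 2 * T + 1 ∣ 2 * M := fun hdvd => by
  have := Int.eq_zero_of_abs_lt_dvd hdvd (by rw [abs_mul, abs_two]; lia)
  lia

lemma chiP_chiNode (hM : M ≠ 0) (hMT : |M| ≤ T) (j : ℤ) :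
    (chiP T M (chiNode T M j) : ℂ) = (-1) ^ j := by
  obtain ⟨i, rfl | rfl⟩ := Int.even_or_odd' j
  · have hnode : chiNode T M (2 * i) = 2 * T + 1 - 2 * M + (8 * T + 4) * i := by
      rw [chiNode]; ring
    rw [hnode, chiP_add_mul, (even_two_mul i).neg_one_zpow]
    simp [chiP]
  · have hnode : chiNode T M (2 * i + 1) = -(2 * T + 1 + 2 * M) + (8 * T + 4) * (i + 1) := by
      rw [chiNode]; ring
    have hne₁ : ¬ -(2 * T + 1 + 2 * M) ≡ 2 * T + 1 - 2 * M [ZMOD 8 * T + 4] := by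
      rw [Int.modEq_iff_dvd]
      rintro ⟨c, hc⟩
      have : (2 * T + 1) * (2 * c - 1) = 0 := by linarith
      rcases mul_eq_zero.1 this with _ | _ <;> lia
    have hne₂ : ¬ -(2 * T + 1 + 2 * M) ≡ -(2 * T + 1 - 2 * M) [ZMOD 8 * T + 4] := by
      rw [Int.modEq_iff_dvd]
      rintro ⟨c, hc⟩
      exact not_dvd_two_mul hM hMT ⟨2 * c, by linarith⟩
    rw [hnode, chiP_add_mul, (odd_two_mul_add_one i).neg_one_zpow, chiP,
      if_neg (by exact not_or.2 ⟨hne₁, hne₂⟩), if_pos (Or.inr rfl)]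
    simp

lemma exists_chiNode_of_chiP_ne_zero {k : ℤ} (hk : chiP T M k ≠ 0) :
    ∃ j, chiNode T M j = k ∨ chiNode T M j = -k := by
  have hmod {x : ℤ} (h : k % (8 * T + 4) = x % (8 * T + 4)) : ∃ c, k = x + (8 * T + 4) * c := by
    obtain ⟨c, hc⟩ := Int.ModEq.dvd (Eq.symm h : x ≡ k [ZMOD 8 * T + 4])
    exact ⟨c, by linarith⟩
  unfold chiP at hk
  unfold chiNode
  split_ifs at hk with hpos hneg
  · rcases hpos with h | h <;> obtain ⟨c, rfl⟩ := hmod h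
    · exact ⟨2 * c, Or.inl (by ring)⟩
    · exact ⟨-(2 * c), Or.inr (by ring)⟩
  · rcases hneg with h | h <;> obtain ⟨c, rfl⟩ := hmod h
    · exact ⟨-(2 * c) - 1, Or.inr (by ring)⟩
    · exact ⟨2 * c - 1, Or.inl (by ring)⟩
  · exact absurd rfl hk

lemma chiNode_injective (T M : ℤ) : Function.Injective (chiNode T M) := fun i j hij =>
  mul_left_cancel₀ (show 2 * (2 * T + 1) ≠ 0 by lia) (add_right_cancel hij)

lemma chiNode_mem_Icc (hMT : |M| ≤ T) {j n : ℤ} (hj : j ∈ Ico 0 n) :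
    chiNode T M j ∈ Icc 1 (2 * (2 * T + 1) * n - 1) := by
  rw [mem_Ico] at hj
  have := abs_le.1 hMT
  rw [mem_Icc, chiNode]
  constructor <;> nlinarith

lemma mem_Ico_of_chiNode_mem_Icc (hMT : |M| ≤ T) {j n : ℤ}
    (hj : chiNode T M j ∈ Icc 0 (2 * (2 * T + 1) * n)) : j ∈ Ico 0 n := by
  rw [mem_Icc, chiNode] at hj
  have := abs_le.1 hMT
  rw [mem_Ico]
  constructor <;> by_contra! h <;> nlinarith

lemma chiNode_add_chiNode_ne (hM : M ≠ 0) (hMT : |M| ≤ T) (i j n : ℤ) :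
    chiNode T M i + chiNode T M j ≠ 2 * (2 * T + 1) * n := fun h =>
  not_dvd_two_mul hM hMT ⟨i + j + 1 - n, by unfold chiNode at h; linarith⟩

lemma exists_mem_Ico_chiNode_of_chiP_ne_zero (hMT : |M| ≤ T) {k n : ℤ}
    (hk : k ∈ Icc 1 (4 * (2 * T + 1) * n)) (hchi : chiP T M k ≠ 0) :
    ∃ j ∈ Ico 0 (2 * n), chiNode T M j = k ∨ 4 * (2 * T + 1) * n - chiNode T M j = k := by
  have hmem {j : ℤ} (hj : chiNode T M j ∈ Icc 0 (4 * (2 * T + 1) * n)) : j ∈ Ico 0 (2 * n) :=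
    mem_Ico_of_chiNode_mem_Icc hMT (by convert hj using 2; ring)
  rw [mem_Icc] at hk
  obtain ⟨j, hj | hj⟩ := exists_chiNode_of_chiP_ne_zero hchi
  · exact ⟨j, hmem (mem_Icc.2 (by lia)), Or.inl hj⟩
  · have hj' : chiNode T M (j + 2 * n) = 4 * (2 * T + 1) * n - k := by
      unfold chiNode at hj ⊢
      linarith
    exact ⟨j + 2 * n, hmem (mem_Icc.2 (by lia)), Or.inr (by lia)⟩

lemma sum_chiP_mul (hM : M ≠ 0) (hMT : |M| ≤ T) (n : ℤ) (f : ℤ → ℂ)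
    (hf : ∀ k, f (4 * (2 * T + 1) * n - k) = f k) :
    ∑ k ∈ Icc 1 (4 * (2 * T + 1) * n), chiP T M k * f k =
      2 * ∑ j ∈ Ico 0 (2 * n), (-1) ^ j * f (chiNode T M j) := by
  set p := 4 * (2 * T + 1) * n with hp
  set S := (Ico 0 (2 * n)).image (chiNode T M)
  set S' := S.image (p - ·)
  have hS : ∑ k ∈ S, chiP T M k * f k = ∑ j ∈ Ico 0 (2 * n), (-1) ^ j * f (chiNode T M j) := by
    rw [sum_image (chiNode_injective T M).injOn]
    exact sum_congr rfl fun j _ => by rw [chiP_chiNode hM hMT]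
  have hS' : ∑ k ∈ S', chiP T M k * f k = ∑ k ∈ S, chiP T M k * f k := by
    rw [sum_image sub_right_injective.injOn]
    exact sum_congr rfl fun k _ => by rw [hp, chiP_reflect, hf]
  have hdisj : Disjoint S S' := by
    simp only [S, S', disjoint_left, mem_image, not_exists, not_and]
    rintro _ ⟨i, -, rfl⟩ _ ⟨j, -, rfl⟩ h
    exact chiNode_add_chiNode_ne hM hMT i j (2 * n) (by linarith)
  have hsub : S ∪ S' ⊆ Icc 1 p := by
    intro k hk
    simp only [S, S', mem_union, mem_image] at hk
    rcases hk with ⟨j, hj, rfl⟩ | ⟨_, ⟨j, hj, rfl⟩, rfl⟩ <;>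
    · have := mem_Icc.1 (chiNode_mem_Icc hMT hj)
      exact mem_Icc.2 (by lia)
  have hzero : ∀ k ∈ Icc 1 p, k ∉ S ∪ S' → chiP T M k * f k = 0 := by
    intro k hk hkS
    by_contra hne
    have hchi : chiP T M k ≠ 0 := Int.cast_ne_zero.1 (left_ne_zero_of_mul hne)
    obtain ⟨j, hj, hjk | hjk⟩ := exists_mem_Ico_chiNode_of_chiP_ne_zero hMT hk hchi
    · exact hkS (mem_union_left _ (mem_image.2 ⟨j, hj, hjk⟩))
    · exact hkS (mem_union_right _ (mem_image.2 ⟨_, mem_image_of_mem _ hj, hjk⟩))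
  rw [← sum_subset hsub hzero, sum_union hdisj, hS', hS, ← two_mul]

end Character

lemma bern2_eq (x : ℂ) : bern2 x = (x - 1 / 2) ^ 2 - 1 / 12 := by
  rw [bern2]; ring

/-- The exponent of `q` in the `k`-th term of the sum defining `J_N^{(T,M)}(q)`. -/
def jonesExponent (T M k : ℤ) : ℤ := -(2 * T + 1) * k * (k + 1) / 2 + M * k

/-- The exponent of `q` in the prefactor of the sum defining `J_N^{(T,M)}(q)`. -/
def jonesPrefactorExponent (T : ℤ) (N : ℕ) : ℤ := -T + N * ((2 * T + 1) * N + 1) / 2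

/-- The alternating sum in the definition of `J_N^{(T,M)}(q)`, without its prefactor. -/
noncomputable def jonesSum (T M : ℤ) (N : ℕ) (q : ℂ) : ℂ :=
  ∑ k ∈ Icc (-(N : ℤ)) (N - 1), (-1) ^ k * q ^ jonesExponent T M k

/-- The Euler derivative `q d/dq` of `jonesSum` at `q ≠ 0`. -/
noncomputable def jonesDerivSum (T M : ℤ) (N : ℕ) (q : ℂ) : ℂ :=
  ∑ k ∈ Icc (-(N : ℤ)) (N - 1), (-1) ^ k * q ^ jonesExponent T M k * jonesExponent T M k

/-- The numerator `(1 - q ^ N) J_N^{(T,M)}(q)` of the analogue of the colored Jones polynomial. -/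
noncomputable def jonesNumerator (T M : ℤ) (N : ℕ) (q : ℂ) : ℂ :=
  (-1) ^ N * q ^ jonesPrefactorExponent T N * jonesSum T M N q

/-- The `k`-th term of `jonesSum` at `ζ = exp (2πis/N)`, up to a factor independent of `k`, after
completing the square in its exponent. -/
noncomputable def gaussTerm (T M s : ℤ) (N : ℕ) (k : ℤ) : ℂ :=
  (-1) ^ k * zetaPow s N (-(chiNode T M k : ℂ) ^ 2 / (8 * (2 * T + 1)))

/-- The second moment of the Gaussian terms, weighted by the squares of their nodes; it is the
common value, up to explicit factors, of both sides of the limit formula. -/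
noncomputable def gaussMoment (T M s : ℤ) (N : ℕ) : ℂ :=
  ∑ k ∈ Icc (-(N : ℤ)) (N - 1), gaussTerm T M s N k * (chiNode T M k : ℂ) ^ 2

section JonesSum

variable {T M s : ℤ} {N : ℕ}

lemma intCast_two_mul_add_one_ne_zero (T : ℤ) : 2 * (T : ℂ) + 1 ≠ 0 := by
  exact_mod_cast (show 2 * T + 1 ≠ 0 by lia)

lemma jonesExponent_eq (T M k : ℤ) :
    (jonesExponent T M k : ℂ) =
      (2 * T + 1 - 2 * M) ^ 2 / (8 * (2 * T + 1)) -
        (chiNode T M k : ℂ) ^ 2 / (8 * (2 * T + 1)) := by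
  have hT := intCast_two_mul_add_one_ne_zero T
  have hdvd : (2 : ℤ) ∣ -(2 * T + 1) * k * (k + 1) := by
    rw [mul_assoc]
    exact (Int.even_mul_succ_self k).two_dvd.mul_left _
  rw [jonesExponent, Int.cast_add, Int.cast_div hdvd (by norm_num), chiNode]
  push_cast
  field_simp
  ring

lemma jonesPrefactorExponent_eq (T : ℤ) (N : ℕ) :
    (jonesPrefactorExponent T N : ℂ) = -T + N * ((2 * T + 1) * N + 1 : ℤ) / 2 := by
  have hdvd : (2 : ℤ) ∣ N * ((2 * T + 1) * N + 1) := by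
    rw [← even_iff_two_dvd]
    grind
  rw [jonesPrefactorExponent, Int.cast_add, Int.cast_div hdvd (by norm_num)]
  push_cast
  ring

lemma zetaPow_mul_jonesTerm (k : ℤ) :
    zetaPow s N (-(2 * T + 1 - 2 * M) ^ 2 / (8 * (2 * T + 1))) *
      ((-1) ^ k * zetaPow s N 1 ^ jonesExponent T M k) = gaussTerm T M s N k := by
  rw [mul_left_comm, ← zetaPow_intCast, ← zetaPow_add, jonesExponent_eq, gaussTerm]
  ring_nf

lemma zetaPow_mul_jonesPrefactor (hN : N ≠ 0) (hs : Odd s ∨ Odd N) (x : ℂ) :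
    zetaPow s N (T + x) * ((-1) ^ N * zetaPow s N 1 ^ jonesPrefactorExponent T N) =
      -zetaPow s N x := by
  have hexp : (T : ℂ) + x + jonesPrefactorExponent T N =
      x + N * ((2 * T + 1) * N + 1 : ℤ) / 2 := by
    rw [jonesPrefactorExponent_eq]; ring
  rw [mul_left_comm, ← zetaPow_intCast, ← zetaPow_add, hexp, zetaPow_add, mul_left_comm,
    neg_one_pow_mul_zetaPow_half hN hs (by grind), mul_neg_one]

lemma gaussTerm_antiperiodic (hN : N ≠ 0) (hs : Odd s ∨ Odd N) :
    Function.Antiperiodic (gaussTerm T M s N) N := by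
  intro k
  have hT := intCast_two_mul_add_one_ne_zero T
  have hexp : -(chiNode T M (k + N) : ℂ) ^ 2 / (8 * (2 * T + 1)) =
      -(chiNode T M k : ℂ) ^ 2 / (8 * (2 * T + 1)) +
        N * (-(chiNode T M k + (2 * T + 1) * N) : ℤ) / 2 := by
    simp only [chiNode]
    push_cast
    field_simp
    ring
  have hodd : Odd (-(chiNode T M k + (2 * T + 1) * N) + N) := by
    unfold chiNode
    grind
  rw [gaussTerm, gaussTerm, hexp, zetaPow_add, zpow_add₀ (by simp), zpow_natCast]
  linear_combination (-1) ^ k * zetaPow s N (-(chiNode T M k : ℂ) ^ 2 / (8 * (2 * T + 1))) *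
    neg_one_pow_mul_zetaPow_half hN hs hodd

lemma sum_gaussTerm_eq_zero (hN : N ≠ 0) (hs : Odd s ∨ Odd N) (c : ℤ) :
    ∑ k ∈ Ico c (c + 2 * N), gaussTerm T M s N k = 0 :=
  sum_Ico_add_two_mul_eq_zero_of_antiperiodic (by simp) (gaussTerm_antiperiodic hN hs) c

lemma sum_Icc_gaussTerm_eq_zero (hN : N ≠ 0) (hs : Odd s ∨ Odd N) :
    ∑ k ∈ Icc (-(N : ℤ)) (N - 1), gaussTerm T M s N k = 0 := by
  rw [Icc_sub_one_right_eq_Ico]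
  convert! sum_gaussTerm_eq_zero hN hs (-(N : ℤ)) using 3
  ring

lemma jonesSum_zetaPow_one (hN : N ≠ 0) (hs : Odd s ∨ Odd N) :
    jonesSum T M N (zetaPow s N 1) = 0 := by
  refine (mul_eq_zero.1 ?_).resolve_left
    (zetaPow_ne_zero (s := s) (N := N) (-(2 * T + 1 - 2 * M) ^ 2 / (8 * (2 * T + 1))))
  simp only [jonesSum, mul_sum, zetaPow_mul_jonesTerm]
  exact sum_Icc_gaussTerm_eq_zero hN hs

lemma hasDerivAt_jonesSum {q : ℂ} (hq : q ≠ 0) :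
    HasDerivAt (jonesSum T M N) (jonesDerivSum T M N q / q) q := by
  rw [jonesDerivSum, sum_div]
  refine HasDerivAt.fun_sum fun k _ =>
    ((hasDerivAt_zpow (jonesExponent T M k) q (Or.inl hq)).const_mul _).congr_deriv ?_
  rw [zpow_sub_one₀ hq]
  ring

lemma hasDerivAt_jonesNumerator {q : ℂ} (hq : q ≠ 0) (hsum : jonesSum T M N q = 0) :
    HasDerivAt (jonesNumerator T M N)
      ((-1) ^ N * q ^ jonesPrefactorExponent T N * (jonesDerivSum T M N q / q)) q := by
  refine (((hasDerivAt_zpow (jonesPrefactorExponent T N) q (Or.inl hq)).const_mul _).mul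
    (hasDerivAt_jonesSum hq)).congr_deriv ?_
  rw [hsum, mul_zero, zero_add]

lemma tendsto_jonesNumerator_div (hN : N ≠ 0) (hs : Odd s ∨ Odd N) :
    Tendsto (fun q => jonesNumerator T M N q / (1 - q ^ N)) (𝓝[{q | q ^ N ≠ 1}] (zetaPow s N 1))
      (𝓝 (-((-1) ^ N * zetaPow s N 1 ^ jonesPrefactorExponent T N *
        jonesDerivSum T M N (zetaPow s N 1)) / N)) := by
  have hζ : zetaPow s N 1 ≠ 0 := zetaPow_ne_zero 1
  have hsum : jonesSum T M N (zetaPow s N 1) = 0 := jonesSum_zetaPow_one hN hs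
  have hnum : jonesNumerator T M N (zetaPow s N 1) = 0 := by rw [jonesNumerator, hsum, mul_zero]
  simpa only [mul_left_comm (zetaPow s N 1), mul_div_cancel₀ _ hζ] using
    tendsto_div_one_sub_pow (Nat.cast_ne_zero.2 hN) (zetaPow_one_pow hN)
      (hasDerivAt_jonesNumerator (M := M) hζ hsum) hnum

lemma sum_gaussTerm_mul_jonesExponent (hN : N ≠ 0) (hs : Odd s ∨ Odd N) :
    ∑ k ∈ Icc (-(N : ℤ)) (N - 1), gaussTerm T M s N k * jonesExponent T M k =
      -gaussMoment T M s N / (8 * (2 * T + 1)) := by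
  simp only [jonesExponent_eq, mul_sub, sum_sub_distrib, ← sum_mul,
    sum_Icc_gaussTerm_eq_zero hN hs, zero_mul, zero_div, zero_sub, mul_div_assoc',
    ← sum_div, gaussMoment, neg_div]

lemma zetaPow_mul_jonesDerivSum (hN : N ≠ 0) (hs : Odd s ∨ Odd N) :
    zetaPow s N (-(2 * T + 1 - 2 * M) ^ 2 / (8 * (2 * T + 1))) *
        jonesDerivSum T M N (zetaPow s N 1) =
      -gaussMoment T M s N / (8 * (2 * T + 1)) := by
  rw [← sum_gaussTerm_mul_jonesExponent hN hs, jonesDerivSum, mul_sum]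
  exact sum_congr rfl fun k _ => by rw [← mul_assoc, zetaPow_mul_jonesTerm]

lemma zetaPow_mul_jonesPrefactor_mul_jonesDerivSum (hN : N ≠ 0) (hs : Odd s ∨ Odd N) :
    zetaPow s N (T - (2 * T + 1 - 2 * M) ^ 2 / (8 * (2 * T + 1))) *
        ((-1) ^ N * zetaPow s N 1 ^ jonesPrefactorExponent T N *
          jonesDerivSum T M N (zetaPow s N 1)) =
      gaussMoment T M s N / (8 * (2 * T + 1)) := by
  rw [sub_eq_add_neg, ← neg_div, ← mul_assoc, zetaPow_mul_jonesPrefactor hN hs, neg_mul,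
    zetaPow_mul_jonesDerivSum hN hs, neg_div, neg_neg]

lemma sum_gaussTerm_mul_sq_shift (hN : N ≠ 0) (hs : Odd s ∨ Odd N) :
    ∑ j ∈ Ico 0 (2 * (N : ℤ)),
        gaussTerm T M s N j * ((chiNode T M j : ℂ) - 2 * (2 * T + 1) * N) ^ 2 =
      -gaussMoment T M s N := by
  have hIco : Ico 0 (2 * (N : ℤ)) = Ico (-(N : ℤ) + N) (N + N) := by
    rw [neg_add_cancel, two_mul]
  rw [gaussMoment, Icc_sub_one_right_eq_Ico, hIco, ← sum_Ico_add', ← sum_neg_distrib]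
  refine sum_congr rfl fun k _ => ?_
  rw [gaussTerm_antiperiodic hN hs, chiNode, chiNode]
  push_cast
  ring

lemma sum_gaussTerm_mul_bern2 (hN : N ≠ 0) (hs : Odd s ∨ Odd N) :
    ∑ j ∈ Ico 0 (2 * (N : ℤ)),
        gaussTerm T M s N j * bern2 (chiNode T M j / (4 * (2 * T + 1) * N)) =
      -gaussMoment T M s N / (4 * (2 * T + 1) * N) ^ 2 := by
  have hT := intCast_two_mul_add_one_ne_zero T
  have hzero : ∑ j ∈ Ico 0 (2 * (N : ℤ)), gaussTerm T M s N j = 0 := by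
    simpa using sum_gaussTerm_eq_zero (T := T) (M := M) hN hs 0
  have hbern (j : ℤ) : gaussTerm T M s N j * bern2 (chiNode T M j / (4 * (2 * T + 1) * N)) =
      gaussTerm T M s N j * ((chiNode T M j : ℂ) - 2 * (2 * T + 1) * N) ^ 2 /
        (4 * (2 * T + 1) * N) ^ 2 - gaussTerm T M s N j * (1 / 12) := by
    rw [bern2_eq]
    field_simp
    ring
  simp only [hbern, sum_sub_distrib, ← sum_div, ← sum_mul, hzero, zero_mul, sub_zero,
    sum_gaussTerm_mul_sq_shift hN hs]

lemma sum_chiP_mul_zetaPow_mul_bern2 (hM : M ≠ 0) (hMT : |M| ≤ T) (hN : N ≠ 0)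
    (hs : Odd s ∨ Odd N) :
    ∑ k ∈ Icc 1 (4 * (2 * T + 1) * (N : ℤ)),
        chiP T M k * zetaPow s N (-k ^ 2 / (8 * (2 * T + 1))) *
          bern2 (k / (4 * (2 * T + 1) * N)) =
      2 * (-gaussMoment T M s N / (4 * (2 * T + 1) * N) ^ 2) := by
  have hT := intCast_two_mul_add_one_ne_zero T
  have hreflect (k : ℤ) :
      zetaPow s N (-((4 * (2 * T + 1) * N - k : ℤ) : ℂ) ^ 2 / (8 * (2 * T + 1))) *
          bern2 ((4 * (2 * T + 1) * N - k : ℤ) / (4 * (2 * T + 1) * N)) =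
        zetaPow s N (-k ^ 2 / (8 * (2 * T + 1))) * bern2 (k / (4 * (2 * T + 1) * N)) := by
    have hexp : -((4 * (2 * T + 1) * N - k : ℤ) : ℂ) ^ 2 / (8 * (2 * T + 1)) =
        -k ^ 2 / (8 * (2 * T + 1)) + N * (k - 2 * (2 * T + 1) * N : ℤ) := by
      push_cast
      field_simp
      ring
    rw [hexp, zetaPow_add, zetaPow_natCast_mul hN, mul_one, bern2_eq, bern2_eq]
    push_cast
    field_simp
    ring
  simp only [mul_assoc (chiP T M _ : ℂ)]
  rw [sum_chiP_mul hM hMT N _ hreflect, ← sum_gaussTerm_mul_bern2 hN hs]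
  simp only [gaussTerm, mul_assoc]

end JonesSum

theorem stmt11_general (T : ℕ) (M s : ℤ) (N : ℕ) (hM : M ≠ 0) (hMT : |M| ≤ T) (hN : N ≠ 0)
    (hs : Odd s ∨ Odd N) :
    ∃ L : ℂ,
      Tendsto (fun q => jonesNumerator T M N q / (1 - q ^ N))
        (𝓝[{q | q ^ N ≠ 1}] (zetaPow s N 1)) (𝓝 L) ∧
      zetaPow s N (T - (2 * T + 1 - 2 * M) ^ 2 / (8 * (2 * T + 1))) * L =
        (2 * T + 1) * N * ∑ k ∈ Icc 1 (4 * (2 * T + 1) * N),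
          chiP T M k * zetaPow s N (-k ^ 2 / (8 * (2 * T + 1))) *
            bern2 (k / (4 * (2 * T + 1) * N)) := by
  have hT : 2 * (T : ℂ) + 1 ≠ 0 := by exact_mod_cast Nat.succ_ne_zero (2 * T)
  have hcast := sum_Icc_natCast (fun k => chiP T M k *
    zetaPow s N (-k ^ 2 / (8 * (2 * T + 1))) * bern2 (k / (4 * (2 * T + 1) * N)))
    1 (4 * (2 * T + 1) * N)
  have hchi := sum_chiP_mul_zetaPow_mul_bern2 (T := T) hM hMT hN hs
  have hderiv := zetaPow_mul_jonesPrefactor_mul_jonesDerivSum (T := T) (M := M) hN hs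
  push_cast at hcast hchi hderiv
  refine ⟨_, tendsto_jonesNumerator_div hN hs, ?_⟩
  rw [hcast, hchi, ← mul_div_assoc, mul_neg, hderiv]
  field_simp
  ring

/-- STATEGMENT 11: the limit `L` of the quotient defining `J_N^{(t,m)}(q)` as
`q → ζ = exp(2πi/N)` with `q^N ≠ 1` exists, and
`e^{2πi(T - (2T+1-2M)²/(8(2T+1)))/N}·L` equals the Bernoulli-polynomial sum
`(2T+1) N Σ_{k=1}^{4(2T+1)N} χ_{8T+4}^{(M)}(k) e^{-2πik²/(8(2T+1)N)} B₂(k/(4(2T+1)N))`.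
Here the paper's `t, m` are `t+1, m+1` (so `2T+1 = 2t+3`, `2T+1-2M = 2t-2m+1`,
`2T+1+2M = 2t+2m+5`, `8T+4 = 8t+12`). -/
theorem stmt11 (t m N : ℕ) (hmt : m ≤ t) (hN : 1 ≤ N) (ζ : ℂ)
    (hζ : ζ = Complex.exp (2 * Real.pi * Complex.I / N)) :
    ∃ L : ℂ,
      Filter.Tendsto
        (fun q : ℂ =>
          ((-1 : ℂ) ^ N *
              q ^ (-(t : ℤ) - 1 + (N : ℤ) * ((2 * (t : ℤ) + 3) * (N : ℤ) + 1) / 2) *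
              ∑ k ∈ Finset.Icc (-(N : ℤ)) ((N : ℤ) - 1),
                (-1 : ℂ) ^ k *
                  q ^ (-(2 * (t : ℤ) + 3) * k * (k + 1) / 2 + ((m : ℤ) + 1) * k)) /
            (1 - q ^ N))
        (nhdsWithin ζ {q : ℂ | q ^ N ≠ 1}) (nhds L) ∧
      Complex.exp (2 * Real.pi * Complex.I *
          (((t : ℂ) + 1) - (2 * (t : ℂ) - 2 * m + 1) ^ 2 / (8 * (2 * (t : ℂ) + 3))) / N)
          * L =
        (2 * (t : ℂ) + 3) * N *
          ∑ k ∈ Finset.Icc 1 (4 * (2 * t + 3) * N),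
            (chiP ((t : ℤ) + 1) ((m : ℤ) + 1) (k : ℤ) : ℂ) *
              Complex.exp (-2 * Real.pi * Complex.I * (k : ℂ) ^ 2 /
                (8 * (2 * (t : ℂ) + 3) * N)) *
              bern2 ((k : ℂ) / (4 * (2 * (t : ℂ) + 3) * N)) := by
  have h := stmt11_general (t + 1) (m + 1) 1 N (by lia) (abs_le.2 (by lia)) (by lia) (by simp)
  have hℕ : 2 * t + 3 = 2 * (t + 1) + 1 := by ring
  have hℤ : 2 * (t : ℤ) + 3 = 2 * (t + 1) + 1 := by ring
  have hℂ : 2 * (t : ℂ) + 3 = 2 * (t + 1) + 1 := by ring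
  have hnode : 2 * (t : ℂ) - 2 * m + 1 = 2 * (t + 1) + 1 - 2 * (m + 1) := by ring
  have hexp (x y z : ℂ) : -2 * Real.pi * Complex.I * x / (y * z) =
      2 * Real.pi * Complex.I * (-x / y) / z := by field_simp
  simpa only [hζ, hℕ, hℤ, hℂ, hnode, hexp, jonesNumerator, jonesSum, jonesExponent,
    jonesPrefactorExponent, zetaPow, neg_add', Nat.cast_add, Nat.cast_one, Int.cast_add,
    Int.cast_natCast, Int.cast_one, mul_one] using h
end

section
/- Let t ≥ m ≥ 1 and n ≥ 1 be integers and let q ∈ ℂ with 0 < |q| < 1. Then Σ_{ℓ=0}^{n} [ q^{(t+1)ℓ^2 - ℓ} (1 - q^{2ℓ}) / ((q;q)_{n-ℓ} (q;q)_{n+ℓ}) ] · Σ_{k=-ℓ}^{ℓ-1} (-1)^k q^{-(2t+1)k(k+1)/2 + m k} = Σ_{n ≥ n_{2t-1} ≥ n_{2t-2} ≥ … ≥ n_1 ≥ 0} (-1)^{n_t} (1 - q^{n_t - χ(t > m)·n_{t-m}}) · q^{Σ_{i=1}^{t-1} n_{t+i}^2 + n_t(n_t-1)/2 - Σ_{i=1}^{t-1}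 n_i n_{i+1} - Σ_{i=1}^{t-m-1} n_i} / ( (q;q)_{n - n_{2t-1}} (q;q)_{n_{2t-1} - n_{2t-2}} ⋯ (q;q)_{n_2 - n_1} (q;q)_{n_1} ), where the right-hand sum is over all weakly decreasing (2t-1)-tuples of nonnegative integers bounded above by n. (The left-hand side equals -q^{t-n} C_{n-1}^{(t,m)}(q), the coefficient in the cyclotomic expansion of the analogue J_N^{(t,m)} of the colored Jones polynomial.) -/
open Finset

/-- The finite q-Pochhammer symbol `(a;q)_n`. -/
noncomputable def qPoch (q a : ℂ) (n : ℕ) : ℂ := ∏ j ∈ Finset.range n, (1 - a * q ^ j)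

/-- The summand of the right-hand multisum, for a weakly decreasing tuple
`n ≥ n_{2T-1} ≥ … ≥ n_1 ≥ 0`; here the paper's `t, m` equal `t+1, m+1`, the tuple
has length `2t+1`, and `A j = n_{j+1}` (0-based).  Note `χ(T > M)` becomes
`χ(t > m)`, the index `T - M` becomes `t - m` (0-based: `t - m - 1`), and
`Σ_{i=1}^{T-M-1} n_i` becomes a sum of `t - m - 1` terms. -/
noncomputable def CTermM (q : ℂ) (t m n : ℕ) (A : ℕ → ℕ) : ℂ :=
  (-1 : ℂ) ^ (A t) *
  (1 - q ^ ((A t : ℤ) - (if m < t then (A (t - m - 1) : ℤ) else 0))) *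
  q ^ ((∑ i ∈ Finset.range t, (A (t + 1 + i) : ℤ) ^ 2)
      + (A t : ℤ) * ((A t : ℤ) - 1) / 2
      - (∑ i ∈ Finset.range t, (A i : ℤ) * (A (i + 1) : ℤ))
      - (∑ i ∈ Finset.range (t - m - 1), (A i : ℤ))) /
  (qPoch q q (n - A (2 * t)) *
    (∏ i ∈ Finset.range (2 * t), qPoch q q (A (i + 1) - A i)) *
    qPoch q q (A 0))

/-!
Fix the variables `n_t, …, n_{2t-1}` of the multisum. Expanding `1 - q^{n_t - n_{t-m}}` splits the
sum over `n_1, …, n_{t-1}` into a difference of two finite Andrews–Gordon sums in base `q⁻¹`, each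
of which Bailey's lemma, iterated from the unit Bailey pair, turns into a single sum over `k`.
Summation by parts in `k` recognises the difference as the Bailey transform of
`α_l = q^{l² - l} (1 - q^{2l}) ∑_{-l ≤ k < l} (-1)^k q^{-(2t+1)k(k+1)/2 + mk}`. The remaining sums
over `n_t, …, n_{2t-1}` are `t` steps of the Bailey chain in base `q`, each multiplying `α_l` by
`q^{l²}`. The base may be changed to `q⁻¹` because the argument only needs that `q` is nonzero and
not a root of unity.
-/

section

variable {K : Type*} [Field K]

/-- The finite `q`-Pochhammer symbol `(a;q)_n` over a field. -/
def qPochhammer (q a : K) (n : ℕ) : K := ∏ j ∈ range n, (1 - a * q ^ j)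

/-- The reciprocal `1 / (q;q)_n` for an integer `n`, with value `0` for `n < 0` so that bilateral
sums terminate. -/
def invPoch (q : K) (n : ℤ) : K := if n < 0 then 0 else (qPochhammer q q n.toNat)⁻¹

/-- The triangular number `s (s + 1) / 2`; the division is exact. -/
def tri (s : ℤ) : ℤ := s * (s + 1) / 2

variable {q : K}

lemma invPoch_of_neg (q : K) {n : ℤ} (h : n < 0) : invPoch q n = 0 := if_pos h

lemma invPoch_natCast (q : K) (n : ℕ) : invPoch q n = (qPochhammer q q n)⁻¹ := by
  simp [invPoch]

lemma invPoch_zero (q : K) : invPoch q 0 = 1 := by simp [invPoch, qPochhammer]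

lemma invPoch_natCast_succ (q : K) (n : ℕ) :
    invPoch q (n + 1 : ℕ) = invPoch q n * (1 - q ^ (n + 1))⁻¹ := by
  rw [invPoch_natCast, invPoch_natCast, qPochhammer, prod_range_succ, ← pow_succ', mul_inv,
    qPochhammer]

lemma one_sub_pow_ne_zero (hfin : ¬IsOfFinOrder q) {n : ℕ} (hn : n ≠ 0) : 1 - q ^ n ≠ 0 :=
  fun h ↦ hfin (isOfFinOrder_iff_pow_eq_one.2 ⟨n, Nat.pos_of_ne_zero hn, (sub_eq_zero.1 h).symm⟩)

lemma one_sub_zpow_mul_invPoch (hfin : ¬IsOfFinOrder q) (n : ℤ) :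
    (1 - q ^ n) * invPoch q n = invPoch q (n - 1) := by
  obtain h | rfl | h := lt_trichotomy n 0
  · simp [invPoch_of_neg q h, invPoch_of_neg q (by lia : n - 1 < 0)]
  · simp [invPoch_of_neg q neg_one_lt_zero]
  · obtain ⟨k, rfl⟩ : ∃ k : ℕ, n = (k + 1 : ℕ) := ⟨(n - 1).toNat, by lia⟩
    have hk := one_sub_pow_ne_zero hfin k.succ_ne_zero
    rw [invPoch_natCast_succ, zpow_natCast, Nat.cast_succ, add_sub_cancel_right, mul_left_comm,
      mul_inv_cancel₀ hk, mul_one]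

lemma two_mul_tri (s : ℤ) : 2 * tri s = s * (s + 1) :=
  Int.mul_ediv_cancel' (Int.even_mul_succ_self s).two_dvd

lemma invPoch_inv (hq : q ≠ 0) (n : ℤ) :
    invPoch q⁻¹ n = (-1) ^ n * q ^ tri n * invPoch q n := by
  obtain h | h := lt_or_ge n 0
  · simp [invPoch_of_neg _ h]
  lift n to ℕ using h
  induction n with
  | zero => simp [invPoch_zero, tri]
  | succ n ih =>
    have htri : tri (n + 1 : ℕ) = tri n + (n + 1 : ℕ) := by
      push_cast
      linarith [two_mul_tri n, two_mul_tri (n + 1)]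
    have hfactor : (1 - q⁻¹ ^ (n + 1))⁻¹ = -q ^ (n + 1) * (1 - q ^ (n + 1))⁻¹ := by
      have hpow : 1 - q⁻¹ ^ (n + 1) = -(q ^ (n + 1))⁻¹ * (1 - q ^ (n + 1)) := by
        rw [inv_pow, mul_sub, neg_mul, neg_mul, inv_mul_cancel₀ (pow_ne_zero _ hq)]
        ring
      rw [hpow, mul_inv, inv_neg, inv_inv]
    rw [invPoch_natCast_succ, invPoch_natCast_succ, ih, hfactor, htri, zpow_add₀ hq]
    simp only [zpow_natCast]
    ring

/-! ### The `q`-Vandermonde sum -/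

-- The bracket is the difference of the Wilf–Zeilberger certificate; it telescopes when summed.
lemma qVandermonde_certificate (hq : q ≠ 0) (hfin : ¬IsOfFinOrder q) (u v w : ℤ) :
    (1 - q ^ (u + v)) * (invPoch q v * q ^ (u * w) * (invPoch q u * invPoch q w)) =
      invPoch q v * q ^ ((u - 1) * w) * (invPoch q (u - 1) * invPoch q w) +
        (q ^ (u * (w + 1)) * (invPoch q (v - 1) * invPoch q u * invPoch q w) -
          q ^ ((u - 1) * w) * (invPoch q v * invPoch q (u - 1) * invPoch q (w - 1))) := by
  have huv : q ^ (u + v) = q ^ u * q ^ v := zpow_add₀ hq u v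
  have huw : q ^ (u * w) = q ^ ((u - 1) * w) * q ^ w := by rw [← zpow_add₀ hq]; congr 1; ring
  have huw' : q ^ (u * (w + 1)) = q ^ ((u - 1) * w) * q ^ w * q ^ u := by
    rw [← huw, ← zpow_add₀ hq]; congr 1; ring
  rw [← one_sub_zpow_mul_invPoch hfin u, ← one_sub_zpow_mul_invPoch hfin v,
    ← one_sub_zpow_mul_invPoch hfin w, huv, huw, huw']
  ring

lemma sum_qVandermonde_mul (hq : q ≠ 0) (hfin : ¬IsOfFinOrder q) {N b : ℕ} (hb : b ≤ N) {a c : ℤ}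
    (hac : 0 ≤ a ∨ 0 ≤ c) :
    (1 - q ^ (b - a)) * ∑ k ∈ range (N + 1),
        invPoch q (b - k) * q ^ ((k - a) * (k - c)) * (invPoch q (k - a) * invPoch q (k - c)) =
      ∑ k ∈ range (N + 1), invPoch q (b - k) * q ^ ((k - (a + 1)) * (k - c)) *
        (invPoch q (k - (a + 1)) * invPoch q (k - c)) := by
  let H (k : ℕ) : K := q ^ ((k - 1 - a) * (k - c)) *
    (invPoch q (b - k) * invPoch q (k - 1 - a) * invPoch q (k - 1 - c))
  have hcert (k : ℕ) : (1 - q ^ (b - a)) *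
        (invPoch q (b - k) * q ^ ((k - a) * (k - c)) * (invPoch q (k - a) * invPoch q (k - c))) =
      invPoch q (b - k) * q ^ ((k - (a + 1)) * (k - c)) *
        (invPoch q (k - (a + 1)) * invPoch q (k - c)) + (H (k + 1) - H k) := by
    have h := qVandermonde_certificate hq hfin (k - a) (b - k) (k - c)
    simp only [H]
    push_cast
    convert h using 4 <;> ring_nf
  have hH_zero : H 0 = 0 := by
    rcases hac with h | h
    · simp [H, invPoch_of_neg q (by lia : -1 - a < 0)]
    · simp [H, invPoch_of_neg q (by lia : -1 - c < 0)]
  have hH_last : H (N + 1) = 0 := by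
    simp [H, invPoch_of_neg q (by lia : (b : ℤ) - (N + 1) < 0)]
  rw [mul_sum, sum_congr rfl fun k _ ↦ hcert k, sum_add_distrib, sum_range_sub, hH_zero, hH_last,
    sub_zero, add_zero]

lemma sum_qVandermonde (hq : q ≠ 0) (hfin : ¬IsOfFinOrder q) {N b : ℕ} (hb : b ≤ N) {a c : ℤ}
    (hac : 0 ≤ a ∨ 0 ≤ c) :
    ∑ k ∈ range (N + 1),
        invPoch q (b - k) * q ^ ((k - a) * (k - c)) * (invPoch q (k - a) * invPoch q (k - c)) =
      invPoch q (b - a) * invPoch q (b - c) := by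
  have hzero (a : ℤ) (k : ℕ) (hk : k < a ∨ b < k) : invPoch q (b - k) * q ^ ((k - a) * (k - c)) *
      (invPoch q (k - a) * invPoch q (k - c)) = 0 := by
    rcases hk with h | h
    · simp [invPoch_of_neg q (by lia : k - a < 0)]
    · simp [invPoch_of_neg q (by lia : (b : ℤ) - k < 0)]
  obtain h | h := lt_or_ge (b : ℤ) a
  · rw [sum_eq_zero fun k _ ↦ hzero a k (by lia), invPoch_of_neg q (by lia : b - a < 0), zero_mul]
  obtain ⟨d, hd⟩ := Int.le.dest h
  induction d generalizing a with
  | zero =>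
    obtain rfl : a = b := by lia
    rw [sum_eq_single b (fun k _ hk ↦ hzero b k (by lia)) (fun hk ↦ by simp at hk; lia)]
    simp [invPoch_zero]
  | succ d ih =>
    have hba : 1 - q ^ (b - a) ≠ 0 := by
      rw [show b - a = (d + 1 : ℕ) by lia, zpow_natCast]
      exact one_sub_pow_ne_zero hfin d.succ_ne_zero
    apply mul_left_cancel₀ hba
    rw [sum_qVandermonde_mul hq hfin hb hac, ih (by lia) (by lia) (by lia), ← mul_assoc,
      one_sub_zpow_mul_invPoch hfin, sub_sub]

/-! ### The Bailey chain -/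

/-- The transform `β_y = ∑ s, α_s / ((q;q)_{y-s} (q;q)_{y+s})` of Bailey's lemma, with `s` running
over a finite set of integers. -/
def baileySum (q : K) (S : Finset ℤ) (α : ℤ → K) (y : ℕ) : K :=
  ∑ s ∈ S, α s * (invPoch q (y - s) * invPoch q (y + s))

/-- One step of the Bailey chain; `δ = 0` and `δ = 1` are its versions relative to `1` and to
`q`. -/
def baileyStep (q : K) (N : ℕ) (δ : ℤ) (β : ℕ → K) (y : ℕ) : K :=
  ∑ x ∈ range (N + 1), invPoch q (y - x) * q ^ ((x : ℤ) ^ 2 + δ * x) * β x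

lemma baileyStep_congr (q : K) {N : ℕ} (δ : ℤ) {β γ : ℕ → K} (h : ∀ x ≤ N, β x = γ x) :
    baileyStep q N δ β = baileyStep q N δ γ :=
  funext fun _ ↦ sum_congr rfl fun x hx ↦ by rw [h x (Nat.lt_succ_iff.1 (mem_range.1 hx))]

lemma baileyStep_sum (q : K) (N : ℕ) (δ : ℤ) (S : Finset ℤ) (α : ℤ → K) (β : ℤ → ℕ → K) (y : ℕ) :
    baileyStep q N δ (fun x ↦ ∑ s ∈ S, α s * β s x) y =
      ∑ s ∈ S, α s * baileyStep q N δ (β s) y := by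
  simp only [baileyStep, mul_sum]
  rw [sum_comm]
  exact sum_congr rfl fun s _ ↦ sum_congr rfl fun x _ ↦ mul_left_comm _ _ _

lemma baileyStep_baileySum (hq : q ≠ 0) (hfin : ¬IsOfFinOrder q) {N y : ℕ} (hy : y ≤ N)
    (S : Finset ℤ) (α : ℤ → K) :
    baileyStep q N 0 (baileySum q S α) y = baileySum q S (fun s ↦ q ^ s ^ 2 * α s) y := by
  have hterm (s : ℤ) : baileyStep q N 0 (fun x ↦ invPoch q (x - s) * invPoch q (x + s)) y =
      q ^ s ^ 2 * (invPoch q (y - s) * invPoch q (y + s)) := by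
    have h := sum_qVandermonde hq hfin hy (by lia : 0 ≤ s ∨ 0 ≤ -s)
    simp only [sub_neg_eq_add] at h
    rw [← h, baileyStep, mul_sum]
    refine sum_congr rfl fun x _ ↦ ?_
    have hexp : (x : ℤ) ^ 2 + 0 * x = s ^ 2 + (x - s) * (x + s) := by ring
    rw [hexp, zpow_add₀ hq]
    ring
  refine (baileyStep_sum q N 0 S α _ y).trans (sum_congr rfl fun s _ ↦ ?_)
  rw [hterm]
  ring

lemma sum_Icc_eq_zero_of_antisymm {f : ℤ → K} (N : ℕ) (hf : ∀ s, f (-1 - s) = -f s) :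
    ∑ s ∈ Icc (-(N : ℤ) - 1) N, f s = 0 := by
  refine sum_involution (fun s _ ↦ -1 - s) (fun s _ ↦ by rw [hf, add_neg_cancel])
    (fun s _ _ ↦ by lia) (fun s hs ↦ ?_) (fun s _ ↦ by lia)
  rw [mem_Icc] at hs ⊢
  lia

lemma baileySum_eq_of_antisymm (hq : q ≠ 0) (hfin : ¬IsOfFinOrder q) (N : ℕ) {α : ℤ → K}
    (hα : ∀ s, α (-1 - s) = -(q ^ (2 * s + 1) * α s)) (y : ℕ) :
    baileySum q (Icc (-(N : ℤ) - 1) N) α y =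
      ∑ s ∈ Icc (-(N : ℤ) - 1) N, α s * (invPoch q (y - s) * invPoch q (y + 1 + s)) := by
  have hanti := sum_Icc_eq_zero_of_antisymm (K := K) N
    (f := fun s ↦ q ^ s * α s * (invPoch q (y - s) * invPoch q (y + 1 + s))) fun s ↦ by
      rw [hα, show (y : ℤ) - (-1 - s) = y + 1 + s by ring,
        show (y : ℤ) + 1 + (-1 - s) = y - s by ring,
        show q ^ s = q ^ (-1 - s) * q ^ (2 * s + 1) by rw [← zpow_add₀ hq]; congr 1; ring]
      ring
  rw [← sub_zero (∑ s ∈ _, _), ← mul_zero (q ^ (y + 1)), ← hanti, mul_sum, ← sum_sub_distrib]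
  refine sum_congr rfl fun s _ ↦ ?_
  have hrec := one_sub_zpow_mul_invPoch hfin (y + 1 + s)
  rw [add_right_comm, add_sub_cancel_right] at hrec
  rw [← hrec, add_right_comm, zpow_add₀ hq, ← zpow_natCast, Nat.cast_succ]
  ring

lemma baileyStep_one_baileySum (hq : q ≠ 0) (hfin : ¬IsOfFinOrder q) {N y : ℕ} (hy : y ≤ N)
    {α : ℤ → K} (hα : ∀ s, α (-1 - s) = -(q ^ (2 * s + 1) * α s)) :
    baileyStep q N 1 (baileySum q (Icc (-(N : ℤ) - 1) N) α) y =
      baileySum q (Icc (-(N : ℤ) - 1) N) (fun s ↦ q ^ (s ^ 2 + s) * α s) y := by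
  have hterm (s : ℤ) : baileyStep q N 1 (fun x ↦ invPoch q (x - s) * invPoch q (x + 1 + s)) y =
      q ^ (s ^ 2 + s) * (invPoch q (y - s) * invPoch q (y + 1 + s)) := by
    have h := sum_qVandermonde hq hfin hy (by lia : 0 ≤ s ∨ 0 ≤ -1 - s)
    simp only [show ∀ x : ℤ, x - (-1 - s) = x + 1 + s by intro; ring] at h
    rw [← h, baileyStep, mul_sum]
    refine sum_congr rfl fun x _ ↦ ?_
    have hexp : (x : ℤ) ^ 2 + 1 * x = s ^ 2 + s + (x - s) * (x + 1 + s) := by ring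
    rw [hexp, zpow_add₀ hq]
    ring
  have hα' (s : ℤ) : q ^ ((-1 - s) ^ 2 + (-1 - s)) * α (-1 - s) =
      -(q ^ (2 * s + 1) * (q ^ (s ^ 2 + s) * α s)) := by
    rw [hα, show (-1 - s) ^ 2 + (-1 - s) = s ^ 2 + s by ring]
    ring
  rw [baileyStep_congr q 1 fun x _ ↦ baileySum_eq_of_antisymm hq hfin N hα x, baileyStep_sum,
    baileySum_eq_of_antisymm hq hfin N hα']
  refine sum_congr rfl fun s _ ↦ ?_
  rw [hterm]
  ring

lemma baileySum_comp_neg (q : K) {N y : ℕ} (hy : y ≤ N) (α : ℤ → K) :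
    baileySum q (Icc (-(N : ℤ) - 1) N) (fun s ↦ α (-s)) y =
      baileySum q (Icc (-(N : ℤ) - 1) N) α y := by
  have htrim (β : ℤ → K) :
      baileySum q (Icc (-(N : ℤ)) N) β y = baileySum q (Icc (-(N : ℤ) - 1) N) β y :=
    sum_subset (Icc_subset_Icc_left (by lia)) fun s hs hs' ↦ by
      rw [mem_Icc] at hs hs'
      rw [invPoch_of_neg q (by lia : y + s < 0), mul_zero, mul_zero]
  rw [← htrim, ← htrim]
  refine sum_equiv (Equiv.neg ℤ) (fun s ↦ ?_) fun s _ ↦ ?_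
  · simp only [mem_Icc, Equiv.neg_apply]
    lia
  · simp only [Equiv.neg_apply, sub_neg_eq_add, ← sub_eq_add_neg]
    rw [mul_comm (invPoch q (y - s))]

/-! ### Finite Andrews–Gordon sums -/

/-- The Andrews–Gordon Bailey sequence `(-1)^s q^{s(s+1)/2 + i s² + r s}`, obtained from the unit
Bailey pair by `i` steps of the chain. -/
def gordonAlpha (q : K) (i : ℕ) (r s : ℤ) : K :=
  (-1) ^ s * q ^ (tri s + i * s ^ 2 + r * s)

lemma tri_neg_one_sub (s : ℤ) : tri (-1 - s) = tri s := by
  linarith [two_mul_tri s, two_mul_tri (-1 - s)]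

lemma tri_neg (s : ℤ) : tri (-s) = tri s - s := by
  linarith [two_mul_tri s, two_mul_tri (-s)]

lemma neg_one_zpow_neg (s : ℤ) : (-1 : K) ^ (-s) = (-1) ^ s := by
  rw [zpow_neg, ← inv_zpow, inv_neg_one]

lemma neg_one_zpow_neg_one_sub (s : ℤ) : (-1 : K) ^ (-1 - s) = -(-1) ^ s := by
  rw [sub_eq_add_neg, zpow_add₀ (neg_ne_zero.2 one_ne_zero), zpow_neg_one, inv_neg_one,
    neg_one_mul, neg_one_zpow_neg]

lemma gordonAlpha_neg (q : K) (i : ℕ) (r s : ℤ) :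
    gordonAlpha q i r (-s) = gordonAlpha q i (-1 - r) s := by
  rw [gordonAlpha, gordonAlpha, neg_one_zpow_neg, tri_neg]
  congr 2
  ring

lemma gordonAlpha_neg_one_sub (hq : q ≠ 0) (i : ℕ) (s : ℤ) :
    gordonAlpha q (i + 1) i (-1 - s) = -(q ^ (2 * s + 1) * gordonAlpha q (i + 1) i s) := by
  rw [gordonAlpha, gordonAlpha, neg_one_zpow_neg_one_sub, tri_neg_one_sub, mul_left_comm, neg_mul,
    ← zpow_add₀ hq]
  congr 3
  push_cast
  ring

lemma zpow_mul_gordonAlpha (hq : q ≠ 0) (i : ℕ) (r s : ℤ) :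
    q ^ s * gordonAlpha q i r s = gordonAlpha q i (r + 1) s := by
  rw [gordonAlpha, gordonAlpha, mul_left_comm, ← zpow_add₀ hq]
  congr 2
  ring

lemma zpow_sq_mul_gordonAlpha (hq : q ≠ 0) (i : ℕ) (r s : ℤ) :
    q ^ s ^ 2 * gordonAlpha q i r s = gordonAlpha q (i + 1) r s := by
  rw [gordonAlpha, gordonAlpha, mul_left_comm, ← zpow_add₀ hq]
  congr 2
  push_cast
  ring

lemma gordonAlpha_zero_neg (hq : q ≠ 0) (s : ℤ) :
    gordonAlpha q 0 0 (-s) = q ^ (-s) * gordonAlpha q 0 0 s := by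
  rw [gordonAlpha_neg, sub_zero, ← neg_add_cancel (1 : ℤ), ← zpow_mul_gordonAlpha hq, ← mul_assoc,
    ← zpow_add₀ hq, neg_add_cancel, zpow_zero, one_mul]

lemma pow_mul_baileySum_gordonAlpha_zero (hq : q ≠ 0) (hfin : ¬IsOfFinOrder q) {N y : ℕ}
    (hy : y ≤ N) :
    q ^ y * baileySum q (Icc (-(N : ℤ) - 1) N) (gordonAlpha q 0 0) y =
      baileySum q (Icc (-(N : ℤ) - 1) N) (gordonAlpha q 0 0) y := by
  have hanti := sum_Icc_eq_zero_of_antisymm (K := K) N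
    (f := fun s ↦ gordonAlpha q 0 0 s * (invPoch q (y - 1 - s) * invPoch q (y + s))) fun s ↦ by
      rw [show (y : ℤ) - 1 - (-1 - s) = y + s by ring, show (y : ℤ) + (-1 - s) = y - 1 - s by ring,
        gordonAlpha, gordonAlpha, neg_one_zpow_neg_one_sub, tri_neg_one_sub]
      simp only [Nat.cast_zero, zero_mul, add_zero]
      ring
  have hreflect (s : ℤ) :
      q ^ y * (gordonAlpha q 0 0 (-s) * (invPoch q (y - s) * invPoch q (y + s))) =
        gordonAlpha q 0 0 s * (invPoch q (y - s) * invPoch q (y + s)) -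
          gordonAlpha q 0 0 s * (invPoch q (y - 1 - s) * invPoch q (y + s)) := by
    rw [gordonAlpha_zero_neg hq, sub_right_comm, ← one_sub_zpow_mul_invPoch hfin (y - s),
      sub_eq_add_neg, zpow_add₀ hq, zpow_natCast]
    ring
  conv_lhs => rw [← baileySum_comp_neg q hy, baileySum, mul_sum]
  rw [sum_congr rfl fun s _ ↦ hreflect s, sum_sub_distrib, hanti, sub_zero, baileySum]

lemma baileySum_gordonAlpha_zero (hq : q ≠ 0) (hfin : ¬IsOfFinOrder q) {N y : ℕ} (hy : y ≤ N) :
    baileySum q (Icc (-(N : ℤ) - 1) N) (gordonAlpha q 0 0) y = if y = 0 then 1 else 0 := by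
  split_ifs with h
  · subst h
    rw [baileySum, sum_eq_single 0 (fun s _ hs ↦ ?_) (fun h0 ↦ ?_)]
    · simp [gordonAlpha, invPoch_zero, tri]
    · obtain hs | hs := lt_or_gt_of_ne hs
      · rw [invPoch_of_neg q (by lia : (0 : ℕ) + s < 0), mul_zero, mul_zero]
      · rw [invPoch_of_neg q (by lia : (0 : ℕ) - s < 0), zero_mul, mul_zero]
    · exact absurd (mem_Icc.2 ⟨by lia, by lia⟩) h0
  · have hmul : (1 - q ^ y) * baileySum q (Icc (-(N : ℤ) - 1) N) (gordonAlpha q 0 0) y = 0 := by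
      rw [sub_mul, one_mul, pow_mul_baileySum_gordonAlpha_zero hq hfin hy, sub_self]
    exact (mul_eq_zero.1 hmul).resolve_left (one_sub_pow_ne_zero hfin h)

/-- The iterated Andrews–Gordon sum: `i` steps of the Bailey chain, the first `r` of them relative
to `q`, applied to `1 / (q;q)_y`. -/
def gordonSum (q : K) (N r : ℕ) : ℕ → ℕ → K
  | 0, y => invPoch q y
  | i + 1, y => baileyStep q N (if i < r then 1 else 0) (gordonSum q N r i) y

theorem gordonSum_eq_baileySum (hq : q ≠ 0) (hfin : ¬IsOfFinOrder q) {N : ℕ} (r i : ℕ) {y : ℕ}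
    (hy : y ≤ N) :
    gordonSum q N r i y =
      baileySum q (Icc (-(N : ℤ) - 1) N) (gordonAlpha q (i + 1) (min i r : ℕ)) y := by
  induction i generalizing y with
  | zero =>
    have hstep := baileyStep_baileySum hq hfin hy (Icc (-(N : ℤ) - 1) N) (gordonAlpha q 0 0)
    simp only [zpow_sq_mul_gordonAlpha hq] at hstep
    rw [gordonSum, Nat.zero_min, Nat.cast_zero, ← hstep,
      baileyStep_congr q 0 fun x hx ↦ baileySum_gordonAlpha_zero hq hfin hx, baileyStep]
    simp
  | succ i ih =>
    rw [gordonSum, baileyStep_congr q _ fun x hx ↦ ih hx]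
    split_ifs with h
    · rw [min_eq_left h.le, min_eq_left (Nat.succ_le_of_lt h),
        baileyStep_one_baileySum hq hfin hy (gordonAlpha_neg_one_sub hq i)]
      simp only [zpow_add₀ hq, mul_assoc, zpow_mul_gordonAlpha hq, zpow_sq_mul_gordonAlpha hq,
        Nat.cast_succ]
    · rw [min_eq_right (by lia), min_eq_right (by lia), baileyStep_baileySum hq hfin hy]
      simp only [zpow_sq_mul_gordonAlpha hq]

lemma baileySum_inv (hq : q ≠ 0) (S : Finset ℤ) (α : ℤ → K) (y : ℕ) :
    baileySum q⁻¹ S α y = q ^ (y ^ 2 + y) * baileySum q S (fun s ↦ q ^ s ^ 2 * α s) y := by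
  rw [baileySum, baileySum, mul_sum]
  refine sum_congr rfl fun s _ ↦ ?_
  have hsign : (-1 : K) ^ (y - s) * (-1) ^ (y + s) = 1 := by
    rw [← zpow_add₀ (neg_ne_zero.2 one_ne_zero), sub_add_add_cancel]
    exact Even.neg_one_zpow ⟨y, rfl⟩
  have hexp : tri (y - s) + tri (y + s) = (y ^ 2 + y : ℕ) + s ^ 2 := by
    push_cast
    linarith [two_mul_tri (y - s), two_mul_tri (y + s)]
  have hpow : q ^ tri (y - s) * q ^ tri (y + s) = q ^ (y ^ 2 + y) * q ^ s ^ 2 := by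
    rw [← zpow_add₀ hq, hexp, zpow_add₀ hq, zpow_natCast]
  rw [invPoch_inv hq, invPoch_inv hq]
  linear_combination (α s * invPoch q (y - s) * invPoch q (y + s)) *
    (q ^ tri (y - s) * q ^ tri (y + s) * hsign + hpow)

/-! ### Summation by parts -/

lemma sum_sub_mul_sum_Icc {h : ℤ → K} (hsymm : ∀ s, h (1 - s) = h s) (c : ℤ → K) (n : ℕ) :
    ∑ l ∈ range n, (h l - h (l + 1)) * ∑ k ∈ Icc (-(l : ℤ)) (l - 1), c k +
        h n * ∑ k ∈ Icc (-(n : ℤ)) (n - 1), c k =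
      ∑ k ∈ Icc (-(n : ℤ)) (n - 1), h (k + 1) * c k := by
  induction n with
  | zero => simp
  | succ n ih =>
    have hIcc : Icc (-((n + 1 : ℕ) : ℤ)) ((n + 1 : ℕ) - 1) =
        insert (n : ℤ) (insert (-(n : ℤ) - 1) (Icc (-(n : ℤ)) (n - 1))) := by
      ext k
      simp only [mem_Icc, mem_insert]
      lia
    have hn : (n : ℤ) ∉ insert (-(n : ℤ) - 1) (Icc (-(n : ℤ)) (n - 1)) := by
      simp only [mem_Icc, mem_insert]
      lia
    have hn' : -(n : ℤ) - 1 ∉ Icc (-(n : ℤ)) (n - 1) := by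
      simp only [mem_Icc]
      lia
    have hends : h (-n - 1 + 1) = h (n + 1) := by
      rw [← hsymm]
      congr 1
      ring
    rw [sum_range_succ, hIcc, sum_insert hn, sum_insert hn', sum_insert hn, sum_insert hn', ← ih,
      hends, Nat.cast_succ]
    ring

/-- The sequence `q^{l² - l} (1 - q^{2l}) ∑_{-l ≤ k < l} c_k` from which the cyclotomic coefficients
arise as Bailey transforms. -/
noncomputable def cyclotomicAlpha (q : K) (c : ℤ → K) (l : ℤ) : K :=
  q ^ (l ^ 2 - l) * (1 - q ^ (2 * l)) * ∑ k ∈ Icc (-l) (l - 1), c k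

/-- The kernel by which summation by parts turns the partial sums in `cyclotomicAlpha` into a sum
over the individual `c k`. -/
def abelKernel (q : K) (x : ℕ) (s : ℤ) : K :=
  q ^ (s ^ 2 - s) * (invPoch q (x - s) * invPoch q (x + s - 1))

lemma abelKernel_one_sub (q : K) (x : ℕ) (s : ℤ) : abelKernel q x (1 - s) = abelKernel q x s := by
  rw [abelKernel, abelKernel, show (1 - s) ^ 2 - (1 - s) = s ^ 2 - s by ring,
    show (x : ℤ) - (1 - s) = x + s - 1 by ring, show (x : ℤ) + (1 - s) - 1 = x - s by ring,
    mul_comm (invPoch q (x - s))]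

lemma abelKernel_add_one (hq : q ≠ 0) (hfin : ¬IsOfFinOrder q) (x : ℕ) (s : ℤ) :
    abelKernel q x (s + 1) =
      q ^ s ^ 2 * (q ^ s - q ^ x) * (invPoch q (x - s) * invPoch q (x + s)) := by
  have hshift : q ^ (x - s) * q ^ s = q ^ x := by
    rw [← zpow_add₀ hq, sub_add_cancel, zpow_natCast]
  rw [abelKernel, show (s + 1) ^ 2 - (s + 1) = s ^ 2 + s by ring, ← add_assoc,
    add_sub_cancel_right, ← sub_sub, ← one_sub_zpow_mul_invPoch hfin (x - s), zpow_add₀ hq,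
    ← hshift]
  ring

lemma abelKernel_sub_abelKernel_add_one (hq : q ≠ 0) (hfin : ¬IsOfFinOrder q) (x : ℕ) (l : ℤ) :
    abelKernel q x l - abelKernel q x (l + 1) =
      q ^ (l ^ 2 - l) * (1 - q ^ (2 * l)) * (invPoch q (x - l) * invPoch q (x + l)) := by
  have hsq : q ^ l ^ 2 = q ^ (l ^ 2 - l) * q ^ l := by rw [← zpow_add₀ hq, sub_add_cancel]
  rw [abelKernel_add_one hq hfin, hsq, two_mul, zpow_add₀ hq l l, abelKernel,
    ← one_sub_zpow_mul_invPoch hfin (x + l), zpow_add₀ hq, zpow_natCast]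
  ring

lemma baileySum_cyclotomicAlpha (hq : q ≠ 0) (hfin : ¬IsOfFinOrder q) {N x : ℕ} (hx : x ≤ N)
    (c : ℤ → K) :
    baileySum q ((range (N + 1)).map Nat.castEmbedding) (cyclotomicAlpha q c) x =
      baileySum q (Icc (-(N : ℤ) - 1) N) (fun k ↦ q ^ k ^ 2 * (q ^ k * c k)) x -
        q ^ x * baileySum q (Icc (-(N : ℤ) - 1) N) (fun k ↦ q ^ k ^ 2 * c k) x := by
  have hlast : abelKernel q x (N + 1 : ℕ) = 0 := by
    simp [abelKernel, invPoch_of_neg q (by lia : (x : ℤ) - (N + 1) < 0)]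
  have habel := sum_sub_mul_sum_Icc (abelKernel_one_sub q x) c (N + 1)
  rw [hlast, zero_mul, add_zero, Nat.cast_succ, neg_add', add_sub_cancel_right] at habel
  simp only [baileySum, sum_map, Nat.castEmbedding_apply, mul_sum, ← sum_sub_distrib]
  calc _ = ∑ l ∈ range (N + 1), (abelKernel q x l - abelKernel q x (l + 1)) *
          ∑ k ∈ Icc (-(l : ℤ)) (l - 1), c k :=
        sum_congr rfl fun l _ ↦ by
          rw [abelKernel_sub_abelKernel_add_one hq hfin, cyclotomicAlpha, mul_right_comm]
    _ = _ := habel.trans (sum_congr rfl fun k _ ↦ by rw [abelKernel_add_one hq hfin]; ring)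

lemma not_isOfFinOrder_inv (hfin : ¬IsOfFinOrder q) : ¬IsOfFinOrder q⁻¹ := fun h ↦ by
  obtain ⟨n, hn, hpow⟩ := isOfFinOrder_iff_pow_eq_one.1 h
  exact hfin (isOfFinOrder_iff_pow_eq_one.2 ⟨n, hn, by rwa [inv_pow, inv_eq_one] at hpow⟩)

lemma gordonSum_pred_eq_baileySum (hq : q ≠ 0) (hfin : ¬IsOfFinOrder q) {N r i y : ℕ}
    (hr : r ≤ i) (hy : y ≤ N) :
    gordonSum q N (r - 1) i y =
      baileySum q (Icc (-(N : ℤ) - 1) N) (gordonAlpha q (i + 1) (r - 1)) y := by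
  rw [gordonSum_eq_baileySum hq hfin _ _ hy, min_eq_right (by lia)]
  -- For `r = 0` the truncated `r - 1` is `0`, not `-1`; the reflection `s ↦ -s` swaps the two.
  obtain rfl | hpos := Nat.eq_zero_or_pos r
  · rw [← baileySum_comp_neg q hy]
    simp only [gordonAlpha_neg]
    simp
  · rw [Nat.cast_pred hpos]

lemma gordonSum_inv_sub (hq : q ≠ 0) (hfin : ¬IsOfFinOrder q) {N r i x : ℕ} (hr : r ≤ i)
    (hx : x ≤ N) :
    gordonSum q⁻¹ N (r - 1) i x - q ^ x * gordonSum q⁻¹ N r i x =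
      q ^ (x ^ 2 + x) * baileySum q ((range (N + 1)).map Nat.castEmbedding)
        (cyclotomicAlpha q (gordonAlpha q⁻¹ (i + 1) r)) x := by
  have hq' : q⁻¹ ≠ 0 := inv_ne_zero hq
  have hfin' := not_isOfFinOrder_inv hfin
  have hshift (s : ℤ) :
      gordonAlpha q⁻¹ (i + 1) (r - 1) s = q ^ s * gordonAlpha q⁻¹ (i + 1) r s := by
    have h := zpow_mul_gordonAlpha hq' (i + 1) (r - 1) s
    rw [sub_add_cancel] at h
    rw [← h, inv_zpow, mul_inv_cancel_left₀ (zpow_ne_zero s hq)]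
  rw [gordonSum_pred_eq_baileySum hq' hfin' hr hx, gordonSum_eq_baileySum hq' hfin' r i hx,
    min_eq_right hr, baileySum_inv hq, baileySum_inv hq, baileySum_cyclotomicAlpha hq hfin hx]
  simp only [hshift]
  ring

/-! ### The multisum as a transfer-matrix sum -/

/-- The transfer-matrix sum over all sequences `x₀, …, x_{L-1} ≤ N` ending at `x_L = y`, with
initial weight `v x₀` and weight `e i x_i x_{i+1}` for the `i`-th step. -/
def pathSum (v : ℕ → K) (e : ℕ → ℕ → ℕ → K) (N : ℕ) : ℕ → ℕ → K
  | 0, y => v y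
  | i + 1, y => ∑ x ∈ range (N + 1), e i x y * pathSum v e N i x

/-- The numerator contributed to the multisum by a step from `x` to `y`, where `x` is the `i`-th
variable counted from `0`. The parameter `r` is the number of variables in the linear term of the
exponent, and `c` that of extra factors `q ^ x` at the middle variable `i = t`; the two monomials of
`1 - q ^ (n_{t+1} - n_{t-m})` correspond to different `(r, c)`. -/
def stepWeight (q : K) (t r c i x y : ℕ) : K :=
  if i < t then q ^ (-(x * y : ℤ) - if i < r then (x : ℤ) else 0)
  else if i = t then (-1) ^ x * q ^ (tri (x - 1) + c * x)
  else q ^ (x : ℤ) ^ 2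

/-- The full weight of the step from `x` to `y`; it vanishes unless `x ≤ y`. -/
def edgeWeight (q : K) (t r c i x y : ℕ) : K := invPoch q (y - x) * stepWeight q t r c i x y

lemma gordonSum_inv_eq_pathSum (hq : q ≠ 0) (N r c : ℕ) {t i : ℕ} (hi : i ≤ t) (y : ℕ) :
    gordonSum q⁻¹ N r i y =
      (-1) ^ y * q ^ tri y * pathSum (fun x ↦ invPoch q x) (edgeWeight q t r c) N i y := by
  induction i generalizing y with
  | zero => rw [gordonSum, pathSum, invPoch_inv hq, zpow_natCast]
  | succ i ih =>
    rw [gordonSum, baileyStep, pathSum, mul_sum]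
    refine sum_congr rfl fun x _ ↦ ?_
    have hsign : (-1 : K) ^ (y - x : ℤ) * (-1) ^ x = (-1) ^ y := by
      rw [← zpow_natCast, ← zpow_natCast, ← zpow_add₀ (neg_ne_zero.2 one_ne_zero), sub_add_cancel]
    have hexp : tri (y - x) + (-(x ^ 2 + (if i < r then 1 else 0) * x) + tri x) =
        tri y + (-(x * y) - if i < r then (x : ℤ) else 0) := by
      split_ifs <;> linarith [two_mul_tri (y - x), two_mul_tri x, two_mul_tri y]
    have hpow := congrArg (q ^ ·) hexp
    simp only [zpow_add₀ hq (tri _), zpow_add₀ hq (-_)] at hpow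
    rw [ih (by lia), invPoch_inv hq, inv_zpow', edgeWeight, stepWeight,
      if_pos (by lia : i < t), ← hsign]
    linear_combination ((-1 : K) ^ (y - x : ℤ) * (-1) ^ x * invPoch q (y - x) *
      pathSum (fun x ↦ invPoch q x) (edgeWeight q t r c) N i x) * hpow

lemma pathSum_middle_sub (hq : q ≠ 0) (hfin : ¬IsOfFinOrder q) {N r t x : ℕ} (hr : r ≤ t)
    (hx : x ≤ N) :
    (-1) ^ x * q ^ tri (x - 1) *
        (pathSum (fun x ↦ invPoch q x) (edgeWeight q t (r - 1) 0) N t x -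
          q ^ x * pathSum (fun x ↦ invPoch q x) (edgeWeight q t r 1) N t x) =
      q ^ (x : ℤ) ^ 2 * baileySum q ((range (N + 1)).map Nat.castEmbedding)
        (cyclotomicAlpha q (gordonAlpha q⁻¹ (t + 1) r)) x := by
  have h := gordonSum_inv_sub hq hfin hr hx
  rw [gordonSum_inv_eq_pathSum hq N _ 0 le_rfl, gordonSum_inv_eq_pathSum hq N _ 1 le_rfl] at h
  have htri : tri x = x + tri (x - 1) := by linarith [two_mul_tri x, two_mul_tri (x - 1)]
  apply mul_left_cancel₀ (pow_ne_zero x hq)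
  rw [htri, zpow_add₀ hq, zpow_natCast, pow_add, ← zpow_natCast q (x ^ 2), Nat.cast_pow] at h
  linear_combination h

lemma pathSum_edgeWeight_succ_of_gt (q : K) (N r c : ℕ) {t i : ℕ} (hi : t < i) (y : ℕ) :
    pathSum (fun x ↦ invPoch q x) (edgeWeight q t r c) N (i + 1) y =
      baileyStep q N 0 (pathSum (fun x ↦ invPoch q x) (edgeWeight q t r c) N i) y := by
  simp only [pathSum, baileyStep, edgeWeight, stepWeight, if_neg hi.not_gt, if_neg hi.ne', zero_mul,
    add_zero]

lemma pathSum_sub_eq_baileySum (hq : q ≠ 0) (hfin : ¬IsOfFinOrder q) {N r t : ℕ} (hr : r ≤ t)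
    (i : ℕ) {y : ℕ} (hy : y ≤ N) :
    pathSum (fun x ↦ invPoch q x) (edgeWeight q t (r - 1) 0) N (t + 1 + i) y -
        pathSum (fun x ↦ invPoch q x) (edgeWeight q t r 1) N (t + 1 + i) y =
      baileySum q ((range (N + 1)).map Nat.castEmbedding)
        (fun l ↦ q ^ ((i + 1) * l ^ 2) * cyclotomicAlpha q (gordonAlpha q⁻¹ (t + 1) r) l) y := by
  induction i generalizing y with
  | zero =>
    simp only [Nat.cast_zero, zero_add, one_mul, add_zero]
    rw [← baileyStep_baileySum hq hfin hy, pathSum, pathSum, baileyStep, ← sum_sub_distrib]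
    refine sum_congr rfl fun x hx ↦ ?_
    have hmid := pathSum_middle_sub hq hfin hr (Nat.lt_succ_iff.1 (mem_range.1 hx))
    simp only [edgeWeight, stepWeight, lt_irrefl, if_false, if_true, zpow_add₀ hq, Nat.cast_zero,
      Nat.cast_one, one_mul, zero_mul, zpow_zero, zpow_natCast]
    linear_combination invPoch q (y - x) * hmid
  | succ i ih =>
    have hstep := baileyStep_baileySum hq hfin hy ((range (N + 1)).map Nat.castEmbedding)
      (fun l ↦ q ^ ((i + 1) * l ^ 2) * cyclotomicAlpha q (gordonAlpha q⁻¹ (t + 1) r) l)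
    rw [← baileyStep_congr q 0 fun x hx ↦ ih hx] at hstep
    have hexp (l : ℤ) : l ^ 2 + (i + 1) * l ^ 2 = ((i + 1 : ℕ) + 1) * l ^ 2 := by
      push_cast
      ring
    simp only [← mul_assoc, ← zpow_add₀ hq, hexp] at hstep
    rw [← hstep, ← add_assoc, pathSum_edgeWeight_succ_of_gt q N _ 0 (by lia),
      pathSum_edgeWeight_succ_of_gt q N _ 1 (by lia)]
    simp only [baileyStep, mul_sub, sum_sub_distrib]

lemma pathSum_succ_eq_sum (v : ℕ → K) (e : ℕ → ℕ → ℕ → K) (N L y : ℕ) :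
    pathSum v e N (L + 1) y = ∑ a : Fin (L + 1) → Fin (N + 1),
      v (a 0) * (∏ i : Fin L, e i (a i.castSucc) (a i.succ)) * e L (a (Fin.last L)) y := by
  induction L generalizing y with
  | zero =>
    rw [← (Equiv.funUnique (Fin 1) (Fin (N + 1))).symm.sum_comp, pathSum, sum_range]
    exact sum_congr rfl fun x _ ↦ by simp [pathSum, mul_comm]
  | succ L ih =>
    rw [← (Fin.snocEquiv fun _ : Fin (L + 2) ↦ Fin (N + 1)).sum_comp, Fintype.sum_prod_type,
      pathSum, sum_range]
    refine sum_congr rfl fun x _ ↦ ?_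
    rw [ih, mul_sum]
    refine sum_congr rfl fun a _ ↦ ?_
    simp only [Fin.snocEquiv, Equiv.coe_fn_mk]
    have hcast (i : Fin (L + 1)) : (Fin.snoc a x : Fin (L + 2) → Fin (N + 1)) i.castSucc = a i :=
      Fin.snoc_castSucc (α := fun _ ↦ Fin (N + 1)) x a i
    have hlast : (Fin.snoc a x : Fin (L + 2) → Fin (N + 1)) (Fin.last (L + 1)) = x :=
      Fin.snoc_last (α := fun _ ↦ Fin (N + 1)) x a
    have hzero : (Fin.snoc a x : Fin (L + 2) → Fin (N + 1)) 0 = a 0 := hcast 0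
    rw [Fin.prod_univ_castSucc]
    simp only [← Fin.castSucc_succ, Fin.succ_last, hzero, hcast, hlast, Fin.val_castSucc,
      Fin.val_last]
    ring

/-- The exponent of `q` in the multisum for the tuple `n_{j+1} = A j`, with `r` variables in the
linear term. -/
def multisumExponent (t r : ℕ) (A : ℕ → ℕ) : ℤ :=
  (∑ i ∈ range t, (A (t + 1 + i) : ℤ) ^ 2) + (A t : ℤ) * ((A t : ℤ) - 1) / 2 -
    (∑ i ∈ range t, (A i : ℤ) * (A (i + 1) : ℤ)) - ∑ i ∈ range r, (A i : ℤ)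

/-- The analogue of `CTermM` over a field. -/
def multisumTerm (q : K) (t m n : ℕ) (A : ℕ → ℕ) : K :=
  (-1) ^ A t * (1 - q ^ ((A t : ℤ) - if m < t then (A (t - m - 1) : ℤ) else 0)) *
    q ^ multisumExponent t (t - m - 1) A /
    (qPochhammer q q (n - A (2 * t)) *
      (∏ i ∈ range (2 * t), qPochhammer q q (A (i + 1) - A i)) * qPochhammer q q (A 0))

lemma prod_zpow_eq_zpow_sum (hq : q ≠ 0) (s : Finset ℕ) (f : ℕ → ℤ) :
    ∏ i ∈ s, q ^ f i = q ^ ∑ i ∈ s, f i := by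
  induction s using Finset.induction_on with
  | empty => simp
  | insert i s hi ih => rw [prod_insert hi, sum_insert hi, ih, zpow_add₀ hq]

lemma prod_stepWeight (hq : q ≠ 0) {t r : ℕ} (hr : r ≤ t) (c : ℕ) (A : ℕ → ℕ) :
    ∏ i ∈ range (2 * t + 1), stepWeight q t r c i (A i) (A (i + 1)) =
      (-1) ^ A t * q ^ (multisumExponent t r A + c * A t) := by
  have hlow : ∏ i ∈ range t, stepWeight q t r c i (A i) (A (i + 1)) =
      q ^ (-(∑ i ∈ range t, (A i : ℤ) * (A (i + 1) : ℤ)) - ∑ i ∈ range r, (A i : ℤ)) := by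
    have hfilter : {i ∈ range t | i < r} = range r := by
      ext i
      simp only [mem_filter, mem_range]
      lia
    rw [← hfilter, sum_filter, ← sum_neg_distrib, ← sum_sub_distrib, ← prod_zpow_eq_zpow_sum hq]
    exact prod_congr rfl fun i hi ↦ if_pos (mem_range.1 hi)
  have hmiddle : stepWeight q t r c t (A t) (A (t + 1)) =
      (-1) ^ A t * q ^ ((A t : ℤ) * ((A t : ℤ) - 1) / 2 + c * A t) := by
    rw [stepWeight, if_neg (lt_irrefl t), if_pos rfl, tri, sub_add_cancel, mul_comm ((A t : ℤ) - 1)]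
  have hhigh : ∏ i ∈ range t, stepWeight q t r c (t + 1 + i) (A (t + 1 + i)) (A (t + 1 + i + 1)) =
      q ^ ∑ i ∈ range t, (A (t + 1 + i) : ℤ) ^ 2 := by
    rw [← prod_zpow_eq_zpow_sum hq]
    exact prod_congr rfl fun i _ ↦ by rw [stepWeight, if_neg (by lia), if_neg (by lia)]
  rw [show 2 * t + 1 = t + 1 + t by ring, prod_range_add, prod_range_succ, hlow, hmiddle, hhigh,
    mul_left_comm, mul_assoc, ← zpow_add₀ hq, ← zpow_add₀ hq]
  congr 2
  rw [multisumExponent]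
  ring

lemma prod_invPoch_sub {A : ℕ → ℕ} {L : ℕ} (hA : ∀ i < L, A i ≤ A (i + 1)) :
    ∏ i ∈ range L, invPoch q (A (i + 1) - A i) =
      (∏ i ∈ range L, qPochhammer q q (A (i + 1) - A i))⁻¹ := by
  rw [← prod_inv_distrib]
  exact prod_congr rfl fun i hi ↦ by
    rw [← Nat.cast_sub (hA i (mem_range.1 hi)), invPoch_natCast]

lemma prod_edgeWeight (hq : q ≠ 0) {t r n : ℕ} (hr : r ≤ t) (c : ℕ) {A : ℕ → ℕ}
    (hA : ∀ i < 2 * t, A i ≤ A (i + 1)) (hn : A (2 * t) ≤ n) :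
    invPoch q (A 0) * (∏ i ∈ range (2 * t), edgeWeight q t r c i (A i) (A (i + 1))) *
        edgeWeight q t r c (2 * t) (A (2 * t)) n =
      (-1) ^ A t * q ^ (multisumExponent t r A + c * A t) /
      (qPochhammer q q (n - A (2 * t)) *
        (∏ i ∈ range (2 * t), qPochhammer q q (A (i + 1) - A i)) * qPochhammer q q (A 0)) := by
  have hlast : stepWeight q t r c (2 * t) (A (2 * t)) n =
      stepWeight q t r c (2 * t) (A (2 * t)) (A (2 * t + 1)) := by
    simp only [stepWeight, if_neg (by lia : ¬2 * t < t)]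
  simp only [edgeWeight, prod_mul_distrib]
  rw [← prod_stepWeight hq hr, prod_range_succ _ (2 * t), prod_invPoch_sub hA, hlast,
    ← Nat.cast_sub hn, invPoch_natCast, invPoch_natCast, div_eq_mul_inv, mul_inv, mul_inv]
  ring

lemma multisumTerm_eq_sub (hq : q ≠ 0) {t m n : ℕ} {A : ℕ → ℕ}
    (hA : ∀ i < 2 * t, A i ≤ A (i + 1)) (hn : A (2 * t) ≤ n) :
    multisumTerm q t m n A =
      invPoch q (A 0) *
            (∏ i ∈ range (2 * t), edgeWeight q t (t - m - 1) 0 i (A i) (A (i + 1))) *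
          edgeWeight q t (t - m - 1) 0 (2 * t) (A (2 * t)) n -
        invPoch q (A 0) * (∏ i ∈ range (2 * t), edgeWeight q t (t - m) 1 i (A i) (A (i + 1))) *
          edgeWeight q t (t - m) 1 (2 * t) (A (2 * t)) n := by
  have hsum : ∑ i ∈ range (t - m), (A i : ℤ) =
      ∑ i ∈ range (t - m - 1), (A i : ℤ) + if m < t then (A (t - m - 1) : ℤ) else 0 := by
    split_ifs with h
    · rw [← sum_range_succ, Nat.sub_add_cancel (by lia)]
    · simp [Nat.sub_eq_zero_of_le (not_lt.1 h)]
  rw [multisumTerm, prod_edgeWeight hq (by lia) 0 hA hn, prod_edgeWeight hq (by lia) 1 hA hn,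
    multisumExponent, multisumExponent, ← sub_div, ← mul_sub, hsum, Nat.cast_zero, zero_mul,
    add_zero, Nat.cast_one, one_mul, mul_assoc (_ ^ _), sub_mul, one_mul, ← zpow_add₀ hq]
  congr 4
  ring

/-- The extension by zero of a tuple of naturals at most `N` to a sequence. -/
def zeroExtend {L N : ℕ} (a : Fin L → Fin (N + 1)) (j : ℕ) : ℕ :=
  if h : j < L then (a ⟨j, h⟩ : ℕ) else 0

lemma zeroExtend_val {L N : ℕ} (a : Fin L → Fin (N + 1)) (i : Fin L) : zeroExtend a i = a i :=
  dif_pos i.isLt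

lemma multisumTerm_zeroExtend (hq : q ≠ 0) {t m n : ℕ} (a : Fin (2 * t + 1) → Fin (n + 1)) :
    (if ∀ i : Fin (2 * t), a i.castSucc ≤ a i.succ then multisumTerm q t m n (zeroExtend a)
        else 0) =
      invPoch q (a 0) *
            (∏ i : Fin (2 * t), edgeWeight q t (t - m - 1) 0 i (a i.castSucc) (a i.succ)) *
          edgeWeight q t (t - m - 1) 0 (2 * t) (a (Fin.last (2 * t))) n -
        invPoch q (a 0) *
            (∏ i : Fin (2 * t), edgeWeight q t (t - m) 1 i (a i.castSucc) (a i.succ)) *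
          edgeWeight q t (t - m) 1 (2 * t) (a (Fin.last (2 * t))) n := by
  split_ifs with hmono
  · have hA (i : ℕ) (hi : i < 2 * t) : zeroExtend a i ≤ zeroExtend a (i + 1) := by
      have h := hmono ⟨i, hi⟩
      rwa [Fin.le_def, ← zeroExtend_val a, ← zeroExtend_val a] at h
    have hlast : zeroExtend a (2 * t) = a (Fin.last (2 * t)) := zeroExtend_val a (Fin.last _)
    have hn : zeroExtend a (2 * t) ≤ n := hlast.trans_le (Nat.lt_succ_iff.1 (a _).isLt)
    simp only [multisumTerm_eq_sub hq hA hn, prod_range, ← zeroExtend_val a, Fin.val_castSucc,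
      Fin.val_succ, Fin.val_last, Fin.val_zero]
  · push Not at hmono
    obtain ⟨i, hi⟩ := hmono
    rw [Fin.lt_def] at hi
    have hprod (r c : ℕ) : ∏ i : Fin (2 * t), edgeWeight q t r c i (a i.castSucc) (a i.succ) = 0 :=
      prod_eq_zero (mem_univ i) (by rw [edgeWeight, invPoch_of_neg q (by lia), zero_mul])
    simp [hprod]

lemma sum_multisumTerm (hq : q ≠ 0) (t m n : ℕ) :
    ∑ a : Fin (2 * t + 1) → Fin (n + 1) with ∀ i : Fin (2 * t), a i.castSucc ≤ a i.succ,
        multisumTerm q t m n (zeroExtend a) =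
      pathSum (fun x ↦ invPoch q x) (edgeWeight q t (t - m - 1) 0) n (2 * t + 1) n -
        pathSum (fun x ↦ invPoch q x) (edgeWeight q t (t - m) 1) n (2 * t + 1) n := by
  rw [pathSum_succ_eq_sum, pathSum_succ_eq_sum, ← sum_sub_distrib, sum_filter]
  exact sum_congr rfl fun a _ ↦ multisumTerm_zeroExtend hq a

lemma gordonAlpha_inv_eq (q : K) {t m : ℕ} (hmt : m ≤ t) (k : ℤ) :
    gordonAlpha q⁻¹ (t + 1) (t - m : ℕ) k =
      (-1) ^ k * q ^ (-(2 * (t : ℤ) + 3) * k * (k + 1) / 2 + ((m : ℤ) + 1) * k) := by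
  have hdiv : -(2 * (t : ℤ) + 3) * k * (k + 1) / 2 = -(2 * (t : ℤ) + 3) * tri k :=
    Int.ediv_eq_of_eq_mul_right two_ne_zero
      (by linear_combination (2 * (t : ℤ) + 3) * two_mul_tri k)
  rw [gordonAlpha, inv_zpow', hdiv, Nat.cast_sub hmt]
  congr 2
  push_cast
  linear_combination ((t : ℤ) + 1) * two_mul_tri k

lemma cyclotomic_summand_eq (hq : q ≠ 0) {l n : ℕ} (hl : l ≤ n) (t : ℕ) (c : ℤ → K) :
    q ^ ((t + 2) * l ^ 2 - l) * (1 - q ^ (2 * l)) /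
          (qPochhammer q q (n - l) * qPochhammer q q (n + l)) *
        ∑ k ∈ Icc (-(l : ℤ)) (l - 1), c k =
      q ^ ((t + 1) * (l : ℤ) ^ 2) * cyclotomicAlpha q c l *
        (invPoch q (n - l) * invPoch q (n + l)) := by
  have hle : l ≤ (t + 2) * l ^ 2 := by nlinarith [Nat.le_self_pow two_ne_zero l]
  have hexp : q ^ ((t + 2) * l ^ 2 - l) = q ^ ((t + 1) * (l : ℤ) ^ 2) * q ^ ((l : ℤ) ^ 2 - l) := by
    rw [← zpow_natCast, Nat.cast_sub hle, ← zpow_add₀ hq]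
    congr 1
    push_cast
    ring
  rw [hexp, cyclotomicAlpha, ← Nat.cast_sub hl, ← Nat.cast_add, invPoch_natCast, invPoch_natCast,
    div_eq_mul_inv, mul_inv, ← zpow_natCast q (2 * l), Nat.cast_mul, Nat.cast_ofNat]
  ring

theorem stmt12_general (hq : q ≠ 0) (hfin : ¬IsOfFinOrder q) {t m : ℕ} (hmt : m ≤ t) (n : ℕ) :
    ∑ l ∈ range (n + 1),
      q ^ ((t + 2) * l ^ 2 - l) * (1 - q ^ (2 * l)) /
          (qPochhammer q q (n - l) * qPochhammer q q (n + l)) *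
        ∑ k ∈ Icc (-(l : ℤ)) ((l : ℤ) - 1),
          (-1) ^ k * q ^ (-(2 * (t : ℤ) + 3) * k * (k + 1) / 2 + ((m : ℤ) + 1) * k) =
    ∑ a : Fin (2 * t + 1) → Fin (n + 1) with ∀ i : Fin (2 * t), a i.castSucc ≤ a i.succ,
      multisumTerm q t m n (zeroExtend a) := by
  have hpaths := pathSum_sub_eq_baileySum hq hfin (Nat.sub_le t m) t le_rfl (N := n)
  rw [show t + 1 + t = 2 * t + 1 by ring] at hpaths
  rw [sum_multisumTerm hq, hpaths, baileySum, sum_map]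
  refine sum_congr rfl fun l hl ↦ ?_
  simp only [← gordonAlpha_inv_eq q hmt, Nat.castEmbedding_apply]
  exact cyclotomic_summand_eq hq (Nat.lt_succ_iff.1 (mem_range.1 hl)) t _

end

/-- the multisum expression for `-q^{t-n} C_{n-1}^{(t,m)}(q)`
(the paper's `t, m` are `t+1, m+1` here, so `2t+1 = 2t+3`, `t+1 = t+2`). -/
theorem stmt12 (t m n : ℕ) (hmt : m ≤ t) (hn : 1 ≤ n) (q : ℂ)
    (hq0 : 0 < ‖q‖) (hq1 : ‖q‖ < 1) :
    (∑ l ∈ Finset.range (n + 1),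
      q ^ ((t + 2) * l ^ 2 - l) * (1 - q ^ (2 * l)) /
          (qPoch q q (n - l) * qPoch q q (n + l)) *
        ∑ k ∈ Finset.Icc (-(l : ℤ)) ((l : ℤ) - 1),
          (-1 : ℂ) ^ k * q ^ (-(2 * (t : ℤ) + 3) * k * (k + 1) / 2 + ((m : ℤ) + 1) * k)) =
    ∑ a ∈ Finset.univ.filter
        (fun a : Fin (2 * t + 1) → Fin (n + 1) =>
          ∀ i : Fin (2 * t), a i.castSucc ≤ a i.succ),
      CTermM q t m n (fun j => if h : j < 2 * t + 1 then (a ⟨j, h⟩ : ℕ) else 0) := by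
  exact stmt12_general (norm_pos_iff.1 hq0) (fun h ↦ hq1.ne h.norm_eq_one) hmt n
end
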